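/- arXiv:1508.07228 — 3 statements merged into one kernel-verified Lean document; each statement's English description precedes it below -/
import Mathlib

section
/- If G is a finite group such that the codegree a(χ) = |G : ker χ|/χ(1) of every irreducible complex character χ of G is a prime power, then G is solvable. -/
/-!
The proof is by induction on `|G|`; it does not use the classification of finite simple groups.

Codegrees of a quotient are codegrees of the group, so if `G` is a counterexample of least order,
then every proper quotient of `G` is solvable. The last term `N` of the derived series is then
contained in every nontrivial normal subgroup, so that every irreducible representation is either
faithful or trivial on `N`. Moreover `N` is not solvable, hence `|N|` has two distinct prime
divisors `q` and `r`. Let `g ∈ N` have order `q`. The regular character vanishes at `g`: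
`∑ χ(1) χ(g) = 0` (`exists_irreps`). The characters trivial on `N` contribute `|G| / |N|`
(computed from `sum_char_subgroup`). A faithful `χ` has `|G| / χ(1) = p ^ k` with `p` prime.

* If `p ≠ q`, then `χ(g) = 0` (`char_eq_zero_of_orderOf`). In substance `χ` is of `q`-defect zero
  and `g` is `q`-singular.
* If `p = q`, then `χ(1) χ(g) / |G| = χ(g) / q ^ k` is integral at `r`.

Dividing the relation by `|G|` shows that `1 / |N|` is integral at `r`, although `r ∣ |N|`
(`false_of_two_primes`).

Integrality at a prime is measured by a valuation ring of `ℂ` which contains the algebraic integers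
and in which that prime is not a unit (`exists_valuationSubring`).

The vanishing statement has the following elementary proof (`classFun_idempotent_eq_zero`). Over a
local ring `R` in which `q` is not a unit, let `f` be a class function that is idempotent for
convolution, and let `H = ⟨g⟩` with `g` of order `q`. Convolution by `f`, written over the group
ring `R[H]`, is an idempotent matrix indexed by `G ⧸ H`. As `R[H]` is local
(`isLocalRing_monoidAlgebra`), the image of this matrix is free, so its trace is a natural number
(`trace_idempotent_matrix`). The coefficient of the trace at `g` is `|G : H| f(g)`, which must
therefore be zero. This applies to `f = (χ(1) / |G|) χ` when `|G| / χ(1)` is prime to `q`.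
-/

open CategoryTheory

/-- The codegree `a(χ) = |G : ker χ| / χ(1)` of the character `χ` of the
finite-dimensional complex representation `V` of `G`. -/
noncomputable def codegree {G : Type} [Group G] (V : FDRep ℂ G) : ℕ :=
  (MonoidHom.ker V.ρ).index / Module.finrank ℂ V

/-! ### Valuation rings of the complex numbers -/

/-- There is a valuation ring of `ℂ` containing all algebraic integers and centred at `p`: the ideal
`pℤ` lies in the nonunits of some valuation ring, and valuation rings are integrally
closed. -/
theorem exists_valuationSubring (p : ℕ) (hp : p.Prime) :
    ∃ B : ValuationSubring ℂ, (∀ z : ℂ, IsIntegral ℤ z → z ∈ B) ∧ (p : ℂ) ∈ B.nonunits := by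
  let A : Subring ℂ := (algebraMap ℤ ℂ).range
  let I : Ideal A := Ideal.span {(p : A)}
  have hI : I ≠ ⊤ := by
    intro h
    rw [Ideal.span_singleton_eq_top] at h
    obtain ⟨⟨y, z, rfl⟩, hy⟩ := h.exists_right_inv
    have h1 : (p : ℂ) * (z : ℂ) = 1 := congrArg Subtype.val hy
    have h2 : (p : ℤ) * z = 1 := by exact_mod_cast h1
    have := Int.isUnit_iff.mp (IsUnit.of_mul_eq_one _ h2)
    have := hp.two_le
    omega
  obtain ⟨B, -, hB⟩ := Ideal.image_subset_nonunits_valuationSubring I hI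
  refine ⟨B, fun z hz => ?_, hB ⟨p, Ideal.mem_span_singleton_self _, by simp⟩⟩
  have hz' : IsIntegral B z := hz.tower_top
  obtain ⟨y, rfl⟩ := (IsIntegrallyClosed.isIntegral_iff (R := B) (K := ℂ)).mp hz'
  exact y.2

theorem inv_mem_of_coprime {p : ℕ} {B : ValuationSubring ℂ} (hB : (p : ℂ) ∈ B.nonunits) {m : ℕ}
    (hm : Nat.Coprime p m) : (m : ℂ)⁻¹ ∈ B := by
  by_contra h
  have hm0 : (m : ℂ) ∈ B.nonunits := by
    have := (B.inv_mem_nonunits_iff (x := (m : ℂ)⁻¹)).mpr (Or.inr h)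
    rwa [inv_inv] at this
  rw [ValuationSubring.mem_nonunits_iff] at hB hm0
  have hz : ∀ z : ℤ, B.valuation (z : ℂ) ≤ 1 := fun z =>
    (B.valuation_le_one_iff _).mpr (intCast_mem B z)
  have hbez : (p : ℂ) * (Nat.gcdA p m : ℤ) + m * (Nat.gcdB p m : ℤ) = 1 := by
    have := Nat.gcd_eq_gcd_ab p m
    rw [hm] at this
    exact_mod_cast this.symm
  have hlt : B.valuation ((p : ℂ) * (Nat.gcdA p m : ℤ) + m * (Nat.gcdB p m : ℤ)) < 1 := by
    refine Valuation.map_add_lt _ ?_ ?_ <;> rw [map_mul]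
    · exact mul_lt_one_of_lt_of_le hB (hz _)
    · exact mul_lt_one_of_lt_of_le hm0 (hz _)
  rw [hbez, map_one] at hlt
  exact lt_irrefl _ hlt

/-! ### Idempotent class functions over a local ring -/

/-- The group ring of an abelian group of exponent dividing `q` is local when `q` lies in the maximal
ideal of the base: modulo any maximal ideal, the residue field has characteristic `q`, so every
`h ∈ H` becomes `1` and the ideal is the preimage of the maximal ideal under augmentation. -/
theorem isLocalRing_monoidAlgebra {R H : Type*} [CommRing R] [IsLocalRing R] [CommGroup H]
    [Finite H] {q : ℕ} (hq : q.Prime) (hR : (q : R) ∈ IsLocalRing.maximalIdeal R)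
    (hH : ∀ h : H, h ^ q = 1) : IsLocalRing (MonoidAlgebra R H) := by
  let aug : MonoidAlgebra R H →ₐ[R] R := MonoidAlgebra.lift R R H 1
  have haug : Function.Surjective aug :=
    fun r => ⟨algebraMap R _ r, by simp only [AlgHom.commutes]; rfl⟩
  -- `R[H]` is integral over `R`, so a maximal ideal lies over the maximal ideal of `R`.
  have key : ∀ m : Ideal (MonoidAlgebra R H), m.IsMaximal →
      m = (IsLocalRing.maximalIdeal R).comap aug := by
    intro m hm
    have hmc : m.comap (algebraMap R (MonoidAlgebra R H)) = IsLocalRing.maximalIdeal R :=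
      IsLocalRing.eq_maximalIdeal (Ideal.isMaximal_comap_of_isIntegral_of_isMaximal m)
    let K := MonoidAlgebra R H ⧸ m
    let : Field K := Ideal.Quotient.field m
    have : Fact q.Prime := ⟨hq⟩
    have hqm : (q : MonoidAlgebra R H) ∈ m := by
      have : (q : R) ∈ m.comap (algebraMap R (MonoidAlgebra R H)) := hmc ▸ hR
      simpa using this
    have hq0 : (q : K) = 0 := by
      have := Ideal.Quotient.eq_zero_iff_mem.mpr hqm
      simpa using this
    have : CharP K q := by
      rw [← CharP.ringChar_of_prime_eq_zero hq hq0]; infer_instance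
    have hone : ∀ h : H, Ideal.Quotient.mk m (MonoidAlgebra.of R H h) = 1 := by
      intro h
      have : (Ideal.Quotient.mk m (MonoidAlgebra.of R H h) - 1 : K) ^ q = 0 := by
        rw [sub_pow_char, ← map_pow, ← map_pow, hH]
        rw [map_one, map_one, one_pow, sub_self]
      exact sub_eq_zero.mp (pow_eq_zero_iff hq.ne_zero |>.mp this)
    have hall : ∀ x, Ideal.Quotient.mk m x = Ideal.Quotient.mk m (algebraMap R _ (aug x)) := by
      intro x
      induction x using MonoidAlgebra.induction_on with
      | of h =>
        have : aug (MonoidAlgebra.of R H h) = 1 := by simp [aug]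
        rw [hone, this, map_one, map_one]
      | add x y hx hy => rw [map_add, hx, hy, map_add, map_add, map_add]
      | smul r x hx =>
        rw [Algebra.smul_def, map_mul, hx, map_mul, map_mul, map_mul, AlgHom.commutes]; rfl
    ext x
    rw [← Ideal.Quotient.eq_zero_iff_mem, hall, Ideal.Quotient.eq_zero_iff_mem, ← Ideal.mem_comap,
      hmc]
    rfl
  refine IsLocalRing.of_unique_max_ideal ⟨(IsLocalRing.maximalIdeal R).comap aug,
    Ideal.comap_isMaximal_of_surjective aug haug, fun m hm => key m hm⟩

/-- The trace of an idempotent matrix over a local ring is the rank of its image, which is projective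
and hence free. -/
theorem trace_idempotent_matrix {A n : Type*} [CommRing A] [IsLocalRing A] [Fintype n]
    [DecidableEq n] (M : Matrix n n A) (hM : M * M = M) : ∃ k : ℕ, M.trace = k := by
  let f := Matrix.toLin' M
  have hf : f ∘ₗ f = f := by rw [← Matrix.toLin'_mul, hM]
  have hfx : ∀ x, f (f x) = f x := fun x => LinearMap.congr_fun hf x
  have : Module.Projective A (LinearMap.range f) :=
    Module.Projective.of_split (LinearMap.range f).subtype f.rangeRestrict (by
      ext ⟨x, y, rfl⟩
      simp [hfx])
  have : Module.Projective A (LinearMap.ker f) :=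
    Module.Projective.of_split (LinearMap.ker f).subtype
      ((LinearMap.id - f).codRestrict (LinearMap.ker f) (fun x => by simp [hfx])) (by
      ext ⟨x, hx⟩
      simp [LinearMap.mem_ker.mp hx])
  have : Module.Finite A (LinearMap.ker f) :=
    Module.Finite.of_surjective
      ((LinearMap.id - f).codRestrict (LinearMap.ker f) (fun x => by simp [hfx])) (by
      rintro ⟨x, hx⟩
      exact ⟨x, by ext1; simp [LinearMap.mem_ker.mp hx]⟩)
  have : Module.Free A (LinearMap.range f) := Module.free_of_flat_of_isLocalRing
  have : Module.Free A (LinearMap.ker f) := Module.free_of_flat_of_isLocalRing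
  refine ⟨Module.finrank A (LinearMap.range f), ?_⟩
  rw [← Matrix.trace_toLin'_eq]
  exact (LinearMap.IsIdempotentElem.isProj_range f hf).trace

theorem bijective_out_mul {G : Type*} [Group G] (H : Subgroup G) :
    Function.Bijective (fun p : (G ⧸ H) × H => p.1.out * (p.2 : G)) := by
  constructor
  · rintro ⟨t, k⟩ ⟨t', k'⟩ h
    dsimp only at h
    have ht : t = t' := by
      have := congrArg (QuotientGroup.mk : G → G ⧸ H) h
      simpa using this
    subst ht
    have := mul_left_cancel h
    rw [Subtype.ext this]
  · intro x
    refine ⟨⟨x, ⟨(x : G ⧸ H).out⁻¹ * x, ?_⟩⟩, by simp⟩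
    rw [← QuotientGroup.eq]
    simp

open scoped IsMulCommutative in
/-- A class function which is idempotent for convolution vanishes at the elements of order `q`, if the
base ring is local and `q` is not a unit in it. -/
theorem classFun_idempotent_eq_zero {R G : Type*} [CommRing R] [IsDomain R] [CharZero R]
    [IsLocalRing R] [Group G] [Fintype G] {q : ℕ} (hq : q.Prime)
    (hR : (q : R) ∈ IsLocalRing.maximalIdeal R) (f : G → R)
    (hclass : ∀ x y, f (y * x * y⁻¹) = f x)
    (hidem : ∀ x, ∑ g, f g * f (g⁻¹ * x) = f x) {g : G} (hg : orderOf g = q) : f g = 0 := by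
  classical
  let H := Subgroup.zpowers g
  have hH : ∀ h : H, h ^ q = 1 := by
    intro h
    have : Nat.card H = q := by rw [Nat.card_zpowers, hg]
    rw [← this, pow_card_eq_one']
  have : IsLocalRing (MonoidAlgebra R H) := isLocalRing_monoidAlgebra hq hR hH
  -- `E` is convolution by `f` on `R[G]`, which is a free `R[H]`-module with one basis vector for
  -- each coset of `H`.
  let E : Matrix (G ⧸ H) (G ⧸ H) (MonoidAlgebra R H) := fun s t =>
    ∑ h : H, MonoidAlgebra.single h (f (s.out * h * t.out⁻¹))
  have hcalc : ∀ s u : G ⧸ H, ∑ t : G ⧸ H, E s t * E t u = E s u := by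
    intro s u
    have h1 : ∀ t : G ⧸ H, E s t * E t u = ∑ l : H, ∑ k : H, MonoidAlgebra.single l
        (f (s.out * (l * k⁻¹ : H) * t.out⁻¹) * f (t.out * k * u.out⁻¹)) := by
      intro t
      simp only [E, Finset.sum_mul_sum, MonoidAlgebra.single_mul_single]
      rw [Finset.sum_comm]
      conv_rhs => rw [Finset.sum_comm]
      refine Finset.sum_congr rfl fun k _ => ?_
      refine Fintype.sum_equiv (Equiv.mulRight k) _ _ fun h => ?_
      simp
    simp only [h1]
    rw [Finset.sum_comm]
    refine Finset.sum_congr rfl fun l _ => ?_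
    simp only [← MonoidAlgebra.singleAddHom_apply, ← map_sum]
    congr 1
    rw [← hidem, ← Fintype.sum_prod_type']
    have hb : Function.Bijective
        (fun p : (G ⧸ H) × H => s.out * (l : G) * (p.1.out * (p.2 : G))⁻¹) :=
      ((Equiv.inv G).trans (Equiv.mulLeft (s.out * (l : G)))).bijective.comp
        (bijective_out_mul H)
    refine Fintype.sum_bijective _ hb _ _ fun ⟨t, k⟩ => ?_
    congr 2
    · simp [mul_assoc]
    · simp [mul_assoc]
  have hE : E * E = E := by
    ext1 s u
    rw [Matrix.mul_apply, hcalc]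
  obtain ⟨k, hk⟩ := trace_idempotent_matrix E hE
  have hg1 : (1 : H) ≠ ⟨g, Subgroup.mem_zpowers g⟩ := by
    intro h
    have : g = 1 := (congrArg Subtype.val h).symm
    rw [this, orderOf_one] at hg
    exact hq.one_lt.ne hg
  -- `s g s⁻¹` is conjugate to `g`, so each diagonal entry has coefficient `f g` at `g`.
  have hdiag : ∀ s : G ⧸ H, (E s s).coeff ⟨g, Subgroup.mem_zpowers g⟩ = f g := by
    intro s
    simp [E, hclass, Finsupp.single_apply, MonoidAlgebra.coeff_sum]
  -- A natural number has zero coefficient at `g ≠ 1`.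
  have hcoef : E.trace.coeff ⟨g, Subgroup.mem_zpowers g⟩ = (k : MonoidAlgebra R H).coeff
    ⟨g, Subgroup.mem_zpowers g⟩ := by rw [hk]
  rw [Matrix.trace, MonoidAlgebra.coeff_sum, Finsupp.finsetSum_apply] at hcoef
  simp only [Matrix.diag_apply, hdiag] at hcoef
  simpa [MonoidAlgebra.natCast_def, Finsupp.single_apply, hg1] using hcoef

/-! ### Irreducible characters -/

/-- Schur's lemma, in terms of linear maps. -/
theorem schur_scalar {G : Type} [Group G] (V : FDRep ℂ G) [Simple V] (T : V →ₗ[ℂ] V)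
    (hT : ∀ g, T ∘ₗ V.ρ g = V.ρ g ∘ₗ T) : ∃ c : ℂ, T = c • LinearMap.id := by
  let f : V ⟶ V := ⟨FGModuleCat.ofHom T, fun g => by
    ext x
    exact (LinearMap.congr_fun (hT g) x)⟩
  have h1 : Module.finrank ℂ (V ⟶ V) = 1 := finrank_endomorphism_simple_eq_one ℂ V
  obtain ⟨c, hc⟩ := (finrank_eq_one_iff_of_nonzero' (𝟙 V) (id_nonzero V)).mp h1 f
  refine ⟨c, ?_⟩
  have : f.hom.hom.hom = (c • 𝟙 V : V ⟶ V).hom.hom.hom := by rw [hc]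
  exact this

/-- The converse of Schur's lemma, by Maschke's theorem. -/
theorem simple_of_scalar {G : Type} [Group G] [Finite G] (V : FDRep ℂ G)
    (hV : Module.finrank ℂ V ≠ 0)
    (h : ∀ T : V →ₗ[ℂ] V, (∀ g, T ∘ₗ V.ρ g = V.ρ g ∘ₗ T) → ∃ c : ℂ, T = c • LinearMap.id) :
    Simple V := by
  rw [FDRep.simple_iff_end_is_rank_one]
  have hne : (𝟙 V : V ⟶ V) ≠ 0 := by
    intro h0
    have h1 : (LinearMap.id : V →ₗ[ℂ] V) = 0 := by
      have : (𝟙 V : V ⟶ V).hom.hom.hom = (0 : V ⟶ V).hom.hom.hom := by rw [h0]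
      exact this
    apply hV
    have : Subsingleton V := ⟨fun a b => by
      have ha := LinearMap.congr_fun h1 a
      have hb := LinearMap.congr_fun h1 b
      simp only [LinearMap.id_apply, LinearMap.zero_apply] at ha hb
      rw [ha, hb]⟩
    exact Module.finrank_zero_of_subsingleton
  refine (finrank_eq_one_iff_of_nonzero' _ hne).mpr fun f => ?_
  obtain ⟨c, hc⟩ := h f.hom.hom.hom (fun g => by
    have := f.comm g
    ext x
    exact (congrArg (fun k => k.hom.hom x) this))
  refine ⟨c, ?_⟩
  ext x
  exact (LinearMap.congr_fun hc x).symm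

theorem finrank_simple_ne_zero {G : Type} [Group G] (V : FDRep ℂ G) [Simple V] :
    Module.finrank ℂ V ≠ 0 := by
  intro h1
  have : Subsingleton V := Module.finrank_zero_iff.mp h1
  refine id_nonzero V ?_
  ext x
  exact Subsingleton.elim (α := V) _ _

/-- An irreducible character `χ` is an idempotent for convolution, up to the factor `|G| / χ(1)`: the
operator `∑ χ(g) ρ(g⁻¹)` is a scalar by Schur's lemma, and evaluating at `x = 1` identifies the
scalar by the orthogonality relation. -/
theorem char_convolution {G : Type} [Group G] [Fintype G] (V : FDRep ℂ G) [Simple V] (x : G) :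
    ∑ g : G, V.character g * V.character (g⁻¹ * x) =
      (Fintype.card G : ℂ) / (Module.finrank ℂ V : ℂ) * V.character x := by
  let s : V →ₗ[ℂ] V := ∑ g : G, V.character g • V.ρ g⁻¹
  have hs : ∀ x, s ∘ₗ V.ρ x = V.ρ x ∘ₗ s := by
    intro x
    rw [← Module.End.mul_eq_comp, ← Module.End.mul_eq_comp, Finset.sum_mul, Finset.mul_sum]
    refine Fintype.sum_equiv (MulAut.conj x⁻¹).toEquiv _ _ fun g => ?_
    simp only [MulEquiv.toEquiv_eq_coe, MulEquiv.coe_toEquiv, MulAut.conj_apply, FDRep.char_conj]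
    rw [smul_mul_assoc, mul_smul_comm, ← map_mul, ← map_mul]
    congr 2
    group
  obtain ⟨c, hc⟩ := schur_scalar V s hs
  have htr : ∀ x, ∑ g : G, V.character g * V.character (g⁻¹ * x) = c * V.character x := by
    intro x
    have : LinearMap.trace ℂ V (s ∘ₗ V.ρ x) = c * V.character x := by
      rw [hc]
      simp [FDRep.character, LinearMap.smul_comp]
    rw [← this]
    rw [← Module.End.mul_eq_comp, Finset.sum_mul, map_sum]
    refine Finset.sum_congr rfl fun g _ => ?_
    rw [smul_mul_assoc, map_smul, smul_eq_mul, ← map_mul]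
    rfl
  rw [htr]
  have h1 := htr 1
  have h2 := (FDRep.simple_iff_char_is_norm_one V).mp inferInstance
  simp only [mul_one] at h1
  rw [h2, FDRep.char_one] at h1
  have hd : (Module.finrank ℂ V : ℂ) ≠ 0 := by exact_mod_cast finrank_simple_ne_zero V
  rw [← Nat.card_eq_fintype_card, h1]
  field_simp

/-- Character values are sums of roots of unity. -/
theorem char_isIntegral {G : Type} [Group G] [Finite G] (V : FDRep ℂ G) (g : G) :
    IsIntegral ℤ (V.character g) := by
  classical
  let b := Module.finBasis ℂ V
  have : V.character g = (LinearMap.toMatrix b b (V.ρ g)).trace :=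
    LinearMap.trace_eq_matrix_trace ℂ b _
  rw [this, Matrix.trace_eq_sum_roots_charpoly]
  refine IsIntegral.multiset_sum fun μ hμ => ?_
  have hr : (V.ρ g).charpoly.IsRoot μ := by
    rw [← LinearMap.charpoly_toMatrix (V.ρ g) b]
    exact Polynomial.isRoot_of_mem_roots hμ
  have he := (Module.End.hasEigenvalue_iff_isRoot_charpoly _ _).mpr hr
  obtain ⟨v, hv⟩ := he.exists_hasEigenvector
  have hpow := hv.pow_apply (Nat.card G)
  rw [← map_pow, pow_card_eq_one', map_one] at hpow
  have h1 : μ ^ Nat.card G = 1 := by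
    by_contra hne
    have : (μ ^ Nat.card G - 1) • v = 0 := by
      rw [sub_smul, one_smul, ← hpow]; simp
    rcases smul_eq_zero.mp this with h | h
    · exact hne (sub_eq_zero.mp h)
    · exact hv.2 h
  exact IsIntegral.of_pow Nat.card_pos (h1 ▸ isIntegral_one)

/-- The degree of an irreducible character divides the group order: by `char_convolution`,
multiplication by `|G| / χ(1)` preserves the finitely generated module over the algebraic integers
spanned by the translates of `χ`, so this rational number is integral. -/
theorem finrank_dvd_card {G : Type} [Group G] [Fintype G] (V : FDRep ℂ G) [Simple V] :
    Module.finrank ℂ V ∣ Fintype.card G := by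
  have hd : (Module.finrank ℂ V : ℂ) ≠ 0 := by exact_mod_cast finrank_simple_ne_zero V
  let O := integralClosure ℤ ℂ
  let F : G → G → ℂ := fun y x => V.character (y * x)
  let N : Submodule O (G → ℂ) := Submodule.span O (Set.range F)
  set c : ℂ := (Fintype.card G : ℂ) / (Module.finrank ℂ V : ℂ) with hc
  have hcN : ∀ n ∈ N, c • n ∈ N := by
    intro n hn
    induction hn using Submodule.span_induction with
    | mem n hn =>
      obtain ⟨y, rfl⟩ := hn
      have : c • F y = ∑ g : G, (⟨V.character g, char_isIntegral V g⟩ : O) • F (g⁻¹ * y) := by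
        ext x
        simp only [Pi.smul_apply, Finset.sum_apply, smul_eq_mul, F]
        rw [← char_convolution V (y * x)]
        refine Finset.sum_congr rfl fun g _ => ?_
        rw [← mul_assoc]
        rfl
      rw [this]
      exact N.sum_mem fun g _ => N.smul_mem _ (Submodule.subset_span ⟨_, rfl⟩)
    | zero => simp
    | add a b _ _ ha hb => rw [smul_add]; exact N.add_mem ha hb
    | smul r a _ ha => rw [smul_comm]; exact N.smul_mem _ ha
  have hN : N ≠ ⊥ := by
    intro h0
    have : F 1 ∈ N := Submodule.subset_span ⟨_, rfl⟩
    rw [h0, Submodule.mem_bot] at this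
    have := congrFun this 1
    simp [F] at this
    exact hd (by exact_mod_cast this)
  have hint : IsIntegral O c :=
    isIntegral_of_smul_mem_submodule N hN (Submodule.fg_span (Set.finite_range F)) c hcN
  have hint' : IsIntegral ℤ c := isIntegral_trans (R := ℤ) (A := O) c hint
  have hq : IsIntegral ℤ ((Fintype.card G : ℚ) / (Module.finrank ℂ V : ℚ)) := by
    have : c = algebraMap ℚ ℂ ((Fintype.card G : ℚ) / (Module.finrank ℂ V : ℚ)) := by
      simp [hc]
    rw [this] at hint'
    exact (isIntegral_algebraMap_iff (algebraMap ℚ ℂ).injective).mp hint'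
  obtain ⟨z, hz⟩ := IsIntegrallyClosed.isIntegral_iff.mp hq
  have hd' : (Module.finrank ℂ V : ℚ) ≠ 0 := by exact_mod_cast finrank_simple_ne_zero V
  rw [eq_div_iff hd'] at hz
  have : (z * Module.finrank ℂ V : ℤ) = Fintype.card G := by
    simp at hz
    exact_mod_cast hz
  exact Int.natCast_dvd_natCast.mp ⟨z, by rw [← this, mul_comm]⟩

/-! ### The regular character -/

theorem trace_mulLeft_pi_matrix {n : ℕ} (d : Fin n → ℕ)
    (x : Π i, Matrix (Fin (d i)) (Fin (d i)) ℂ) :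
    LinearMap.trace ℂ _ (LinearMap.mulLeft ℂ x) = ∑ i, (d i : ℂ) * (x i).trace := by
  classical
  let b := Pi.basis fun i => Matrix.stdBasis ℂ (Fin (d i)) (Fin (d i))
  rw [LinearMap.trace_eq_matrix_trace ℂ b, Matrix.trace, Fintype.sum_sigma]
  refine Finset.sum_congr rfl fun i _ => ?_
  have : ∀ jk : Fin (d i) × Fin (d i),
      (LinearMap.toMatrix b b (LinearMap.mulLeft ℂ x)).diag ⟨i, jk⟩ = x i jk.1 jk.1 := by
    rintro ⟨j, k⟩
    rw [Matrix.diag_apply, LinearMap.toMatrix_apply]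
    simp only [b, Pi.basis_apply, Pi.basis_repr, LinearMap.mulLeft_apply, Pi.mul_apply,
      Pi.single_eq_same, Matrix.stdBasis_eq_single]
    simp [Matrix.stdBasis, Matrix.mul_apply, Matrix.single_apply]
  simp only [this]
  rw [Fintype.sum_prod_type]
  simp [Matrix.trace, Finset.mul_sum]

theorem trace_mulLeft_of {G : Type} [Group G] [Fintype G] [DecidableEq G] (g : G) :
    LinearMap.trace ℂ _ (LinearMap.mulLeft ℂ (MonoidAlgebra.of ℂ G g)) =
      if g = 1 then (Fintype.card G : ℂ) else 0 := by
  let b : Module.Basis G ℂ (MonoidAlgebra ℂ G) := .ofRepr (MonoidAlgebra.coeffLinearEquiv ℂ)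
  rw [LinearMap.trace_eq_matrix_trace ℂ b, Matrix.trace]
  have : ∀ x, (LinearMap.toMatrix b b (LinearMap.mulLeft ℂ (MonoidAlgebra.of ℂ G g))).diag x =
      if g = 1 then 1 else 0 := by
    intro x
    rw [Matrix.diag_apply, LinearMap.toMatrix_apply]
    simp [b, Finsupp.single_apply]
  simp only [this]
  split_ifs <;> simp

/-- The decomposition of the regular character, read off from the Wedderburn decomposition of `ℂ[G]`.
The representations may be chosen pairwise non-isomorphic, but this is not needed. -/
theorem exists_irreps (G : Type) [Group G] [Fintype G] [DecidableEq G] :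
    ∃ (n : ℕ) (V : Fin n → FDRep ℂ G), (∀ i, Simple (V i)) ∧ ∀ g : G,
      ∑ i, (Module.finrank ℂ (V i) : ℂ) * (V i).character g =
        if g = 1 then (Fintype.card G : ℂ) else 0 := by
  obtain ⟨n, d, hd, ⟨e⟩⟩ :=
    IsSemisimpleRing.exists_algEquiv_pi_matrix_of_isAlgClosed (F := ℂ) (R := MonoidAlgebra ℂ G)
  let φ (i : Fin n) : MonoidAlgebra ℂ G →ₐ[ℂ] Module.End ℂ (Fin (d i) → ℂ) :=
    (Matrix.toLinAlgEquiv' (R := ℂ) (n := Fin (d i))).toAlgHom.comp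
      ((Pi.evalAlgHom ℂ (fun i => Matrix (Fin (d i)) (Fin (d i)) ℂ) i).comp e.toAlgHom)
  have hφ : ∀ i, Function.Surjective (φ i) := by
    intro i
    exact (Matrix.toLinAlgEquiv' (R := ℂ) (n := Fin (d i))).surjective.comp
      ((Function.surjective_eval i).comp e.surjective)
  let V (i : Fin n) : FDRep ℂ G := FDRep.of (V := Fin (d i) → ℂ)
    ((φ i : MonoidAlgebra ℂ G →* Module.End ℂ (Fin (d i) → ℂ)).comp (MonoidAlgebra.of ℂ G))
  have hfin : ∀ i, Module.finrank ℂ (V i) = d i := fun i => Module.finrank_fin_fun ℂ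
  refine ⟨n, V, fun i => ?_, fun g => ?_⟩
  · refine simple_of_scalar _ (by rw [hfin]; exact (hd i).out) fun T hT => ?_
    -- `T` commutes with the image of `ℂ[G]`, which is the whole endomorphism algebra.
    have hcomm : ∀ a : MonoidAlgebra ℂ G, (T : Module.End ℂ (Fin (d i) → ℂ)) * φ i a = φ i a * T := by
      intro a
      induction a using MonoidAlgebra.induction_on with
      | of g => exact hT g
      | add x y hx hy => rw [map_add, mul_add, add_mul, hx, hy]
      | smul r x hx => rw [map_smul, mul_smul_comm, smul_mul_assoc, hx]
    have hcen : (T : Module.End ℂ (Fin (d i) → ℂ)) ∈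
        Subalgebra.center ℂ (Module.End ℂ (Fin (d i) → ℂ)) := by
      rw [Subalgebra.mem_center_iff]
      intro S
      obtain ⟨a, rfl⟩ := hφ i S
      exact (hcomm a).symm
    rw [Algebra.IsCentral.center_eq_bot, Algebra.mem_bot] at hcen
    obtain ⟨c, hc⟩ := hcen
    exact ⟨c, hc.symm.trans (Algebra.algebraMap_eq_smul_one c)⟩
  -- Compute the trace of left multiplication by `g` on both sides of the Wedderburn isomorphism.
  · have h1 : LinearMap.mulLeft ℂ (e (MonoidAlgebra.of ℂ G g)) =
        e.toLinearEquiv.conj (LinearMap.mulLeft ℂ (MonoidAlgebra.of ℂ G g)) := by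
      refine LinearMap.ext fun x => ?_
      simp [LinearEquiv.conj_apply]
    rw [← trace_mulLeft_of, ← LinearMap.trace_conj' _ e.toLinearEquiv, ← h1,
      trace_mulLeft_pi_matrix]
    refine Finset.sum_congr rfl fun i _ => ?_
    rw [hfin]
    congr 1
    exact Matrix.trace_toLin'_eq _

/-! ### The two primes argument -/

/-- If `|G| / χ(1)` is a power of a prime other than `q`, then `χ` vanishes at elements of order `q`. -/
theorem char_eq_zero_of_orderOf {G : Type} [Group G] [Fintype G] (V : FDRep ℂ G) [Simple V]
    {q p k : ℕ} (hq : q.Prime) (hp : p.Prime) (hqp : q ≠ p)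
    (hV : Fintype.card G / Module.finrank ℂ V = p ^ k) {g : G} (hg : orderOf g = q) :
    V.character g = 0 := by
  obtain ⟨B, hint, hqB⟩ := exists_valuationSubring q hq
  obtain ⟨m, hm⟩ := finrank_dvd_card V
  have hd : Module.finrank ℂ V ≠ 0 := finrank_simple_ne_zero V
  have hdC : (Module.finrank ℂ V : ℂ) ≠ 0 := by exact_mod_cast hd
  have hmp : m = p ^ k := by
    rw [hm, Nat.mul_div_cancel_left _ (Nat.pos_of_ne_zero hd)] at hV
    exact hV
  have hm0 : (m : ℂ) ≠ 0 := by
    rw [hmp]; exact_mod_cast pow_ne_zero k hp.ne_zero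
  have hcm : (Fintype.card G : ℂ) / (Module.finrank ℂ V : ℂ) = m := by
    rw [hm, Nat.cast_mul, mul_div_cancel_left₀ _ hdC]
  have hminv : (m : ℂ)⁻¹ ∈ B := by
    refine inv_mem_of_coprime hqB ?_
    rw [hmp]
    exact Nat.Coprime.pow_right k ((Nat.coprime_primes hq hp).mpr hqp)
  let f : G → B := fun x => ⟨(m : ℂ)⁻¹ * V.character x,
    mul_mem hminv (hint _ (char_isIntegral V x))⟩
  have hqm : (q : B) ∈ IsLocalRing.maximalIdeal B := by
    obtain ⟨hx, hx'⟩ := ValuationSubring.mem_nonunits_iff_exists_mem_maximalIdeal.mp hqB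
    exact hx'
  have h0 : f g = 0 := by
    refine classFun_idempotent_eq_zero hq hqm f (fun x y => ?_) (fun x => ?_) hg
    · exact Subtype.ext (by simp only [f, FDRep.char_conj])
    · refine Subtype.ext ?_
      have := char_convolution V x
      rw [hcm] at this
      rw [AddSubmonoidClass.coe_finsetSum]
      simp only [f, MulMemClass.coe_mul]
      calc ∑ y : G, (m : ℂ)⁻¹ * V.character y * ((m : ℂ)⁻¹ * V.character (y⁻¹ * x))
          = (m : ℂ)⁻¹ * (m : ℂ)⁻¹ * ∑ y : G, V.character y * V.character (y⁻¹ * x) := by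
            rw [Finset.mul_sum]
            exact Finset.sum_congr rfl fun y _ => by ring
        _ = (m : ℂ)⁻¹ * V.character x := by
            rw [this]; field_simp
  have h1 : (m : ℂ)⁻¹ * V.character g = 0 := congrArg Subtype.val h0
  exact (mul_eq_zero.mp h1).resolve_left (inv_ne_zero hm0)

open Classical in
/-- The operator `∑_{n ∈ N} ρ(n)` is a scalar `c` with `c ρ(n) = c` for `n ∈ N`, so `c = 0` unless `N`
acts trivially. -/
theorem sum_char_subgroup {G : Type} [Group G] [Fintype G] (N : Subgroup G) [N.Normal]
    (V : FDRep ℂ G) [Simple V] :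
    ∑ n : N, V.character n =
      if N ≤ MonoidHom.ker V.ρ then (Fintype.card N : ℂ) * Module.finrank ℂ V else 0 := by
  split_ifs with hN
  · have : ∀ n : N, V.character n = Module.finrank ℂ V := by
      intro n
      rw [FDRep.character, MonoidHom.mem_ker.mp (hN n.2)]
      exact LinearMap.trace_one ℂ V
    simp [this]
  · let P : Module.End ℂ V := ∑ n : N, V.ρ n
    have hP : ∀ g, P * V.ρ g = V.ρ g * P := by
      intro g
      rw [Finset.sum_mul, Finset.mul_sum]
      refine Fintype.sum_equiv (MulAut.conjNormal (H := N) g⁻¹).toEquiv _ _ fun n => ?_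
      rw [← map_mul, ← map_mul]
      congr 1
      simp [mul_assoc]
    obtain ⟨c, hc⟩ := schur_scalar V P hP
    have hPn : ∀ n : N, P * V.ρ n = P := by
      intro n
      rw [Finset.sum_mul]
      refine Fintype.sum_equiv (Equiv.mulRight n) _ _ fun k => ?_
      rw [← map_mul]
      rfl
    have hc0 : c = 0 := by
      by_contra hne
      refine hN fun n hn => ?_
      have h1 := hPn ⟨n, hn⟩
      have h2 : P = c • (1 : Module.End ℂ V) := hc
      rw [h2, smul_mul_assoc, one_mul] at h1
      exact smul_right_injective _ hne h1
    have : LinearMap.trace ℂ V P = 0 := by rw [hc, hc0, zero_smul, map_zero]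
    rw [← this, map_sum]
    rfl

/-- If all codegrees are prime powers and every representation is faithful or trivial on `N`, then `|N|`
does not have two distinct prime divisors. -/
theorem false_of_two_primes {G : Type} [Group G] [Finite G]
    (h : ∀ V : FDRep ℂ G, Simple V → ∃ p k : ℕ, p.Prime ∧ codegree V = p ^ k)
    (N : Subgroup G) [N.Normal]
    (hN : ∀ V : FDRep ℂ G, N ≤ MonoidHom.ker V.ρ ∨ MonoidHom.ker V.ρ = ⊥)
    {q r : ℕ} (hq : q.Prime) (hr : r.Prime) (hqr : q ≠ r) (hqN : q ∣ Nat.card N)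
    (hrN : r ∣ Nat.card N) : False := by
  classical
  have := Fintype.ofFinite G
  have := Fact.mk hq
  obtain ⟨⟨g, hgN⟩, hg⟩ := exists_prime_orderOf_dvd_card' q hqN
  rw [Subgroup.orderOf_mk] at hg
  have hg1 : g ≠ 1 := by
    rintro rfl
    rw [orderOf_one] at hg
    exact hq.one_lt.ne hg
  obtain ⟨n, V, hsimple, hreg⟩ := exists_irreps G
  obtain ⟨B, hint, hrB⟩ := exists_valuationSubring r hr
  have hG0 : (Fintype.card G : ℂ) ≠ 0 := by exact_mod_cast Fintype.card_ne_zero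
  have hN0 : (Fintype.card N : ℂ) ≠ 0 := by exact_mod_cast Fintype.card_ne_zero
  let S : Finset (Fin n) := {i | N ≤ MonoidHom.ker (V i).ρ}
  have hS : ∑ i ∈ S, (Module.finrank ℂ (V i) : ℂ) * Module.finrank ℂ (V i) =
      (Fintype.card G : ℂ) / Fintype.card N := by
    -- Sum the regular character over `N`: only `x = 1` contributes.
    have h1 : ∑ x : N, ∑ i, (Module.finrank ℂ (V i) : ℂ) * (V i).character x =
        (Fintype.card G : ℂ) := by
      simp [hreg]
    rw [Finset.sum_comm] at h1
    have h2 : ∀ i, ∑ x : N, (Module.finrank ℂ (V i) : ℂ) * (V i).character x =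
        if N ≤ MonoidHom.ker (V i).ρ then
          (Fintype.card N : ℂ) * (Module.finrank ℂ (V i) * Module.finrank ℂ (V i)) else 0 := by
      intro i
      have := hsimple i
      rw [← Finset.mul_sum, sum_char_subgroup]
      split_ifs <;> ring
    simp only [h2] at h1
    rw [← Finset.sum_filter, ← Finset.mul_sum] at h1
    rw [eq_div_iff hN0, ← h1, mul_comm]
  have hSg : ∑ i ∈ S, (Module.finrank ℂ (V i) : ℂ) * (V i).character g =
      (Fintype.card G : ℂ) / Fintype.card N := by
    rw [← hS]
    refine Finset.sum_congr rfl fun i hi => ?_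
    have hi' : N ≤ MonoidHom.ker (V i).ρ := (Finset.mem_filter.mp hi).2
    rw [FDRep.character, MonoidHom.mem_ker.mp (hi' hgN)]
    congr 1
    exact LinearMap.trace_one ℂ (V i)
  -- The faithful constituents contribute, after division by `|G|`, a number integral at `r`.
  have hrest : ∀ i ∈ Finset.univ.filter (fun i => ¬ N ≤ MonoidHom.ker (V i).ρ),
      (Fintype.card G : ℂ)⁻¹ * ((Module.finrank ℂ (V i) : ℂ) * (V i).character g) ∈ B := by
    intro i hi
    have := hsimple i
    have hker := (hN (V i)).resolve_left (Finset.mem_filter.mp hi).2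
    obtain ⟨p, k, hp, hpk⟩ := h (V i) (hsimple i)
    rw [codegree, hker, Subgroup.index_bot, Nat.card_eq_fintype_card] at hpk
    by_cases hqp : q = p
    · subst hqp
      obtain ⟨m, hm⟩ := finrank_dvd_card (V i)
      have hd : Module.finrank ℂ (V i) ≠ 0 := finrank_simple_ne_zero (V i)
      have hdC : (Module.finrank ℂ (V i) : ℂ) ≠ 0 := by exact_mod_cast hd
      have hmq : m = q ^ k := by
        rw [hm, Nat.mul_div_cancel_left _ (Nat.pos_of_ne_zero hd)] at hpk
        exact hpk
      have hm0 : (m : ℂ) ≠ 0 := by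
        rw [hmq]; exact_mod_cast pow_ne_zero k hq.ne_zero
      have : (Fintype.card G : ℂ)⁻¹ * ((Module.finrank ℂ (V i) : ℂ) * (V i).character g) =
          (m : ℂ)⁻¹ * (V i).character g := by
        rw [hm, Nat.cast_mul]
        field_simp
      rw [this]
      refine mul_mem (inv_mem_of_coprime hrB ?_) (hint _ (char_isIntegral (V i) g))
      rw [hmq]
      exact Nat.Coprime.pow_right k ((Nat.coprime_primes hr hq).mpr hqr.symm)
    · rw [char_eq_zero_of_orderOf (V i) hq hp hqp hpk hg, mul_zero, mul_zero]
      exact zero_mem B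
  have htot := hreg g
  rw [if_neg hg1, ← Finset.sum_filter_add_sum_filter_not _ (fun i => N ≤ MonoidHom.ker (V i).ρ),
    hSg] at htot
  have hNinv : (Fintype.card N : ℂ)⁻¹ ∈ B := by
    have h1 := neg_mem (sum_mem hrest)
    rw [← Finset.mul_sum, eq_neg_of_add_eq_zero_right htot] at h1
    convert h1 using 1
    field_simp
  rw [Nat.card_eq_fintype_card] at hrN
  obtain ⟨m, hm⟩ := hrN
  have hrinv : (r : ℂ)⁻¹ ∈ B := by
    have hm0 : (m : ℂ) ≠ 0 := by
      rintro hm0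
      rw [hm, Nat.cast_mul, hm0, mul_zero] at hN0
      exact hN0 rfl
    have : (r : ℂ)⁻¹ = m * (Fintype.card N : ℂ)⁻¹ := by
      rw [hm, Nat.cast_mul]
      have : (r : ℂ) ≠ 0 := by exact_mod_cast hr.ne_zero
      field_simp
    rw [this]
    exact mul_mem (natCast_mem B m) hNinv
  have hr0 : (r : ℂ) ≠ 0 := by exact_mod_cast hr.ne_zero
  rw [ValuationSubring.mem_nonunits_iff] at hrB
  have h1 := (B.valuation_le_one_iff _).mpr hrinv
  rw [map_inv₀] at h1
  have h2 := mul_lt_one_of_lt_of_le hrB h1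
  rw [mul_inv_cancel₀ ((Valuation.ne_zero_iff _).mpr hr0)] at h2
  exact lt_irrefl _ h2

/-! ### Reduction to the two primes argument -/

/-- A codegree of `G ⧸ M` is the codegree of the inflated representation of `G`. -/
theorem codegrees_quotient {G : Type} [Group G] [Finite G] (M : Subgroup G) [M.Normal]
    (h : ∀ V : FDRep ℂ G, Simple V → ∃ p k : ℕ, p.Prime ∧ codegree V = p ^ k)
    (V : FDRep ℂ (G ⧸ M)) (hV : Simple V) : ∃ p k : ℕ, p.Prime ∧ codegree V = p ^ k := by
  let W : FDRep ℂ G := FDRep.of (V.ρ.comp (QuotientGroup.mk' M))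
  have hW : codegree W = codegree V := by
    have hk : MonoidHom.ker W.ρ = (MonoidHom.ker V.ρ).comap (QuotientGroup.mk' M) :=
      (MonoidHom.comap_ker V.ρ (QuotientGroup.mk' M)).symm
    unfold codegree
    rw [hk, Subgroup.index_comap_of_surjective _ (QuotientGroup.mk'_surjective M)]
  rw [← hW]
  refine h W (simple_of_scalar W ?_ fun T hT => ?_)
  · intro h0
    have h1 : Module.finrank ℂ V = 0 := h0
    have : Subsingleton V := Module.finrank_zero_iff.mp h1
    refine id_nonzero V ?_
    ext x
    exact Subsingleton.elim (α := V) _ _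
  · refine schur_scalar V T fun g => ?_
    obtain ⟨g, rfl⟩ := QuotientGroup.mk'_surjective M g
    exact hT g

theorem derivedSeries_le_of_isSolvable_quotient {G : Type} [Group G] (M : Subgroup G) [M.Normal]
    (hM : Group.IsSolvable (G ⧸ M)) : ∃ m, derivedSeries G m ≤ M := by
  obtain ⟨m, hm⟩ := hM.solvable
  refine ⟨m, ?_⟩
  have h1 := map_derivedSeries_le_derivedSeries (QuotientGroup.mk' M) m
  rw [hm, Subgroup.map_le_iff_le_comap, MonoidHom.comap_bot, QuotientGroup.ker_mk'] at h1
  exact h1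

theorem exists_two_primes_of_not_isSolvable {N : Type*} [Group N] [Finite N]
    (hN : ¬ Group.IsSolvable N) : ∃ q r : ℕ, q.Prime ∧ r.Prime ∧ q ≠ r ∧ q ∣ Nat.card N ∧
      r ∣ Nat.card N := by
  have hne : Nat.card N ≠ 1 := fun h1 => hN (by
    have := (Nat.card_eq_one_iff_unique.mp h1).1
    infer_instance)
  obtain ⟨q, hq, hqN⟩ := Nat.exists_prime_and_dvd hne
  by_contra! hcon
  refine hN ?_
  have := Fact.mk hq
  have hp : IsPGroup q N := by
    refine IsPGroup.of_card (n := (Nat.card N).primeFactorsList.length) ?_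
    refine Nat.eq_prime_pow_of_unique_prime_dvd Nat.card_pos.ne' fun {d} hd hdN => ?_
    by_contra hdq
    exact hcon q d hq hd (Ne.symm hdq) hqN hdN
  have := hp.isNilpotent
  infer_instance

/-- If all irreducible character codegrees of a finite group are prime powers,
then the group is solvable. -/
theorem solvable_of_codegrees_prime_powers {G : Type} [Group G] [Finite G]
    (h : ∀ V : FDRep ℂ G, Simple V → ∃ p k : ℕ, p.Prime ∧ codegree V = p ^ k) :
    IsSolvable G := by
  induction hn : Nat.card G using Nat.strong_induction_on generalizing G with
  | _ n ih =>
  by_contra hG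
  have hquot : ∀ (M : Subgroup G) [M.Normal], M ≠ ⊥ → Group.IsSolvable (G ⧸ M) := by
    intro M _ hM
    refine ih (Nat.card (G ⧸ M)) ?_ (codegrees_quotient M h) rfl
    rw [← hn, M.card_eq_card_quotient_mul_card_subgroup]
    exact lt_mul_of_one_lt_right Nat.card_pos ((Subgroup.one_lt_card_iff_ne_bot M).mpr hM)
  -- The derived series stabilises at its minimal term.
  obtain ⟨_, ⟨s, rfl⟩, hs⟩ := wellFounded_lt.has_min (Set.range (derivedSeries G)) ⟨_, 0, rfl⟩
  have hmin : ∀ m, derivedSeries G s ≤ derivedSeries G m := by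
    intro m
    rcases le_total s m with hsm | hsm
    · exact (eq_of_le_of_not_lt (derivedSeries_antitone G hsm) (hs _ ⟨m, rfl⟩)).ge
    · exact derivedSeries_antitone G hsm
  have hle : ∀ (M : Subgroup G) [M.Normal], M ≠ ⊥ → derivedSeries G s ≤ M := by
    intro M _ hM
    obtain ⟨m, hm⟩ := derivedSeries_le_of_isSolvable_quotient M (hquot M hM)
    exact (hmin m).trans hm
  have hN1 : derivedSeries G s ≠ ⊥ := fun h0 => hG ⟨⟨s, h0⟩⟩
  have hN : ¬ Group.IsSolvable (derivedSeries G s) := by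
    intro hsol
    have := hquot (derivedSeries G s) hN1
    refine hG (Group.isSolvable_of_ker_le_range (derivedSeries G s).subtype
      (QuotientGroup.mk' (derivedSeries G s)) ?_)
    rw [QuotientGroup.ker_mk', Subgroup.range_subtype]
  obtain ⟨q, r, hq, hr, hqr, hqN, hrN⟩ := exists_two_primes_of_not_isSolvable hN
  refine false_of_two_primes h (derivedSeries G s) (fun V => ?_) hq hr hqr hqN hrN
  by_cases hV : MonoidHom.ker V.ρ = ⊥
  · exact Or.inr hV
  · exact Or.inl (hle _ hV)
end

section
/- Let G be a finite group, M a subnormal subgroup of G, χ an irreducible complex character of G, and ψ an irreducible constituent of the restriction χ|_M (i.e., the inner product ⟨χ|_M, ψ⟩ is nonzero). Then a(ψ) divides a(χ), where a denotes the codegree. -/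
/-!
Fix an irreducible representation `ρ` of `G` on `V` and let `W` be an irreducible constituent of its
restriction to `N`. A subnormal chain is descended one step at a time: by Maschke's theorem a
constituent for `H` of `V` lies under a constituent for `K` whenever `H ≤ K`, so the essential case
is that of a normal subgroup `N` (`codeg_dvd_of_normal_range`).

For `N` normal, write `D = dim V`, `d = dim W` and `L = ker ρ`. Since
`|G : L| = |G : NL| * |N : N ∩ L|` and `N ∩ L ≤ ker σ` (`σ` being the action on `W`), the claim
reduces to the divisibility `D ∣ |G : NL| * d` (`finrank_dvd_index_mul`), together with the
integrality of the codegrees, which is its special case `N = 1`.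

The divisibility is proved without projective representations or Clifford correspondence. The
algebra `End_N(V)` is a product of matrix algebras, and `G / NL` acts on it by conjugation. By
Schur's lemma the fixed points are scalars, so every average is a scalar. The average of a primitive
idempotent is in fact an integral scalar `m` (`exists_nat_average_single`). For an idempotent
projecting onto a copy of `W`, taking traces gives `|G : NL| * d = m * D`.

The integrality of `m` reduces to a single matrix block: if a finite group `T` acts on `M_e(ℂ)` with
scalar averages, then `e ∣ |T|` (`dvd_card_of_average_scalar`). The automorphisms are inner, and
their implementing matrices `b t` of determinant one lie in a finite monoid. The Casimir element
`∑ t, b t ⊗ (b t)⁻¹` is therefore integral over `ℤ`, while it equals `|T| / e` times the flip of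
`ℂᵉ ⊗ ℂᵉ`, whence `|T| / e` is an integer.

The passage from the character inner product to intertwining maps uses that a complex character
takes conjugate values at inverse elements (`star_character`).
-/

open CategoryTheory

/-- The usual inner product of two class functions on a finite group `M`. -/
noncomputable def charInner {M : Type*} (f g : M → ℂ) : ℂ :=
  (Nat.card M : ℂ)⁻¹ * ∑ᶠ m, f m * (starRingEnd ℂ) (g m)

/-- `H` is normal in `K` (as subgroups of an ambient group). -/
def NormalIn {G : Type*} [Group G] (H K : Subgroup G) : Prop :=
  H ≤ K ∧ ∀ k ∈ K, ∀ h ∈ H, k * h * k⁻¹ ∈ H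

/-- `M` is subnormal in `G`: there is a chain `M = M₀ ⊴ M₁ ⊴ ⋯ ⊴ Mₙ = G`. -/
def IsSubnormal {G : Type*} [Group G] (M : Subgroup G) : Prop :=
  ∃ (n : ℕ) (c : Fin (n + 1) → Subgroup G), c 0 = M ∧ c (Fin.last n) = ⊤ ∧
    ∀ i : Fin n, NormalIn (c i.castSucc) (c i.succ)

section
open Representation
open scoped Kronecker

/-! ### Finite groups of automorphisms of a matrix algebra -/

/-- Skolem–Noether, with the conjugating matrix rescaled to determinant one. -/
lemma exists_det_one_conj {e : ℕ} [NeZero e]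
    (β : Matrix (Fin e) (Fin e) ℂ ≃ₐ[ℂ] Matrix (Fin e) (Fin e) ℂ) :
    ∃ B : Matrix (Fin e) (Fin e) ℂ, B.det = 1 ∧ ∀ x, β x * B = B * x := by
  let φ := Matrix.toLinAlgEquiv' (R := ℂ) (n := Fin e)
  obtain ⟨S, hS⟩ := AlgEquiv.eq_linearEquivConjAlgEquiv ((φ.symm.trans β).trans φ)
  let A : Matrix (Fin e) (Fin e) ℂ := φ.symm S.toLinearMap
  let A' : Matrix (Fin e) (Fin e) ℂ := φ.symm S.symm.toLinearMap
  have hAA' : A * A' = 1 := by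
    rw [← map_mul, ← map_one φ.symm]; congr 1
    refine LinearMap.ext fun v => ?_
    exact S.apply_symm_apply v
  have hA'A : A' * A = 1 := mul_eq_one_comm.mp hAA'
  have hA : ∀ x, β x * A = A * x := by
    intro x
    have h := congrArg φ.symm (DFunLike.congr_fun hS (φ x))
    have h2 : φ.symm ((S.conjAlgEquiv ℂ) (φ x)) = A * x * A' := by
      have : S.conjAlgEquiv ℂ (φ x) = S.toLinearMap * φ x * S.symm.toLinearMap := by
        ext; simp
      rw [this, map_mul, map_mul, AlgEquiv.symm_apply_apply]
    rw [h2] at h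
    simp only [AlgEquiv.trans_apply, AlgEquiv.symm_apply_apply] at h
    rw [h, mul_assoc, hA'A, mul_one]
  have hdet : A.det ≠ 0 := by
    intro h
    have := congrArg Matrix.det hAA'
    rw [Matrix.det_mul, h] at this; simp at this
  obtain ⟨c, hc⟩ := IsAlgClosed.exists_pow_nat_eq (A.det⁻¹) (NeZero.pos e)
  refine ⟨c • A, ?_, fun x => ?_⟩
  · rw [Matrix.det_smul, Fintype.card_fin, hc, inv_mul_cancel₀ hdet]
  · rw [mul_smul_comm, hA, smul_mul_assoc]

lemma trace_algEquiv {e : ℕ} [NeZero e]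
    (β : Matrix (Fin e) (Fin e) ℂ ≃ₐ[ℂ] Matrix (Fin e) (Fin e) ℂ)
    (x : Matrix (Fin e) (Fin e) ℂ) : (β x).trace = x.trace := by
  obtain ⟨B, hB, h⟩ := exists_det_one_conj β
  have h1 : B⁻¹ * B = 1 := Matrix.nonsing_inv_mul _ (by simp [hB])
  have h2 : B * B⁻¹ = 1 := Matrix.mul_nonsing_inv _ (by simp [hB])
  rw [← mul_one (β x), ← h2, ← mul_assoc, h, Matrix.trace_mul_comm, ← mul_assoc, h1, one_mul]

/-- The determinant-one matrices inducing by conjugation an automorphism in the image of `β`. The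
condition `β t x * B = B * x` says that `B` induces `β t` without mentioning `B⁻¹`. This is a finite
central extension of the image of `β` by the scalar `e`-th roots of unity; only its monoid structure
is needed. -/
def detOneLifts {e : ℕ} {T : Type*} [Group T]
    (β : T →* (Matrix (Fin e) (Fin e) ℂ ≃ₐ[ℂ] Matrix (Fin e) (Fin e) ℂ)) :
    Submonoid (Matrix (Fin e) (Fin e) ℂ) where
  carrier := {B | B.det = 1 ∧ ∃ t, ∀ x, β t x * B = B * x}
  one_mem' := ⟨Matrix.det_one, 1, fun x => by simp⟩
  mul_mem' := by
    rintro A B ⟨hA, s, hs⟩ ⟨hB, t, ht⟩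
    refine ⟨by rw [Matrix.det_mul, hA, hB, one_mul], s * t, fun x => ?_⟩
    rw [map_mul, AlgEquiv.mul_apply, ← mul_assoc, hs, mul_assoc, ht, mul_assoc]

lemma scalar_of_commute {e : ℕ} [NeZero e] {M : Matrix (Fin e) (Fin e) ℂ}
    (h : ∀ x, x * M = M * x) : ∃ c : ℂ, M = c • 1 := by
  have : M ∈ Set.range (Matrix.scalar (Fin e)) :=
    Matrix.mem_range_scalar_iff_commute_single'.mpr fun i j => h _
  obtain ⟨c, hc⟩ := this
  exact ⟨c, by rw [← hc, Matrix.smul_one_eq_diagonal]; rfl⟩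

/-- Two lifts of the same automorphism differ by a scalar whose `e`-th power is one. -/
lemma finite_detOneLifts {e : ℕ} [NeZero e] {T : Type*} [Group T] [Finite T]
    (β : T →* (Matrix (Fin e) (Fin e) ℂ ≃ₐ[ℂ] Matrix (Fin e) (Fin e) ℂ)) :
    Finite (detOneLifts β) := by
  choose b hb hb' using fun t => exists_det_one_conj (β t)
  have hfin := Set.finite_range
    (fun p : T × rootsOfUnity e ℂ => ((p.2 : ℂˣ) : ℂ) • b p.1)
  refine (hfin.subset ?_).to_subtype
  rintro B ⟨hB, t, ht⟩
  have h1 : (b t)⁻¹ * b t = 1 := Matrix.nonsing_inv_mul _ (by simp [hb])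
  have h2 : b t * (b t)⁻¹ = 1 := Matrix.mul_nonsing_inv _ (by simp [hb])
  obtain ⟨c, hc⟩ := scalar_of_commute (M := (b t)⁻¹ * B) fun x => by
    have : (b t)⁻¹ * β t x = x * (b t)⁻¹ := by
      calc (b t)⁻¹ * β t x = (b t)⁻¹ * (β t x * b t) * (b t)⁻¹ := by
            rw [mul_assoc, mul_assoc, h2, mul_one]
        _ = _ := by rw [hb', ← mul_assoc, h1, one_mul]
    rw [← mul_assoc, ← this, mul_assoc, ht, mul_assoc]
  have hBc : B = c • b t := by
    calc B = b t * ((b t)⁻¹ * B) := by rw [← mul_assoc, h2, one_mul]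
      _ = _ := by rw [hc]; simp
  have hce : c ^ e = 1 := by
    have := hB
    rw [hBc, Matrix.det_smul, hb, Fintype.card_fin, mul_one] at this
    exact this
  have hc0 : c ≠ 0 := by
    rintro rfl
    rw [zero_pow (NeZero.ne e)] at hce
    exact zero_ne_one hce
  refine ⟨(t, ⟨Units.mk0 c hc0, ?_⟩), by simp [hBc]⟩
  rw [mem_rootsOfUnity]
  ext; simpa using hce

/-- If all averages of a finite group of automorphisms of `M_e(ℂ)` are scalar, then `e` divides the
order of the group. For determinant-one lifts `b t`, the Casimir element `∑ t, b t ⊗ (b t)⁻¹` is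
`|T| / e` times the flip, so its square is the scalar `(|T| / e)²`. It is integral over `ℤ`, as the
image of an element of the integral group ring of a finite monoid; hence `|T| / e` is an integer. -/
lemma dvd_card_of_average_scalar {e : ℕ} [NeZero e] {T : Type*} [Group T] [Fintype T]
    (β : T →* (Matrix (Fin e) (Fin e) ℂ ≃ₐ[ℂ] Matrix (Fin e) (Fin e) ℂ))
    (h : ∀ x, ∃ c : ℂ, ∑ t, β t x = c • 1) : e ∣ Fintype.card T := by
  have he : (e : ℂ) ≠ 0 := by exact_mod_cast NeZero.ne e
  choose b hb hb' using fun t => exists_det_one_conj (β t)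
  have h1 : ∀ t, (b t)⁻¹ * b t = 1 := fun t => Matrix.nonsing_inv_mul _ (by simp [hb])
  have h2 : ∀ t, b t * (b t)⁻¹ = 1 := fun t => Matrix.mul_nonsing_inv _ (by simp [hb])
  have hβ : ∀ t x, β t x = b t * x * (b t)⁻¹ := fun t x => by
    rw [← hb', mul_assoc, h2, mul_one]
  have hmem : ∀ t, b t ∈ detOneLifts β := fun t => ⟨hb t, t, hb' t⟩
  have hmem' : ∀ t, (b t)⁻¹ ∈ detOneLifts β := fun t => by
    refine ⟨by simp [Matrix.det_nonsing_inv, hb], t⁻¹, fun x => ?_⟩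
    have : x = β t (β t⁻¹ x) := by
      rw [← AlgEquiv.mul_apply, ← map_mul]; simp
    conv_rhs => rw [this, hβ t, ← mul_assoc, ← mul_assoc, h1, one_mul]
  let q : ℂ := Fintype.card T / e
  have havg : ∀ x, ∑ t, β t x = (q * x.trace) • (1 : Matrix (Fin e) (Fin e) ℂ) := by
    intro x
    obtain ⟨c, hc⟩ := h x
    have htr := congrArg Matrix.trace hc
    have : ∀ t, (β t x).trace = x.trace := fun t => by
      rw [hβ, Matrix.trace_mul_comm, ← mul_assoc, h1, one_mul]
    rw [Matrix.trace_sum, Finset.sum_congr rfl fun t _ => this t] at htr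
    simp at htr
    rw [hc]
    congr 1
    simp only [q]
    field_simp
    rw [htr]
  -- Read off the entries of the Casimir element by averaging the matrix units.
  let C : Matrix (Fin e × Fin e) (Fin e × Fin e) ℂ := ∑ t, b t ⊗ₖ (b t)⁻¹
  have hC : ∀ i j k l, C (i, j) (k, l) = if i = l ∧ j = k then q else 0 := by
    intro i j k l
    have := congrFun (congrFun (havg (Matrix.single k j 1)) i) l
    simp only [hβ, Matrix.sum_apply] at this
    simp only [C, Matrix.sum_apply, Matrix.kroneckerMap_apply]
    have h3 : ∀ t, (b t * Matrix.single k j (1 : ℂ) * (b t)⁻¹ : Matrix (Fin e) (Fin e) ℂ) i l = b t i k * (b t)⁻¹ j l := by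
      intro t
      simp [Matrix.mul_apply, Matrix.single_apply, ite_and]
    rw [Finset.sum_congr rfl fun t _ => h3 t] at this
    rw [this]
    by_cases hil : i = l <;> by_cases hjk : j = k
    · subst hil hjk; simp
    · have : k ≠ j := fun h => hjk h.symm
      simp [hil, hjk, Matrix.trace_single_eq_of_ne _ _ _ this]
    · simp [hil]
    · simp [hil]
  have hCC : C * C = (q ^ 2) • 1 := by
    ext ⟨i, j⟩ ⟨k, l⟩
    rw [Matrix.mul_apply, Fintype.sum_prod_type]
    simp [hC, Matrix.one_apply, ite_and, pow_two]
  have := finite_detOneLifts β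
  let Φ : (detOneLifts β × detOneLifts β) →* Matrix (Fin e × Fin e) (Fin e × Fin e) ℂ :=
    { toFun := fun p => (p.1 : Matrix _ _ ℂ) ⊗ₖ (p.2 : Matrix _ _ ℂ)
      map_one' := by simp
      map_mul' := fun p p' => by simp [Matrix.mul_kronecker_mul] }
  let F := MonoidAlgebra.lift ℤ (Matrix (Fin e × Fin e) (Fin e × Fin e) ℂ) _ Φ
  have hCF : C = F (∑ t, MonoidAlgebra.of ℤ _ (⟨b t, hmem t⟩, ⟨(b t)⁻¹, hmem' t⟩)) := by
    rw [map_sum]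
    refine Finset.sum_congr rfl fun t _ => ?_
    simp [F, Φ]
  have hCint : IsIntegral ℤ C := by
    rw [hCF]
    exact IsIntegral.map F (Algebra.IsIntegral.isIntegral _)
  have hqint : IsIntegral ℤ q := by
    have : IsIntegral ℤ (algebraMap ℂ (Matrix (Fin e × Fin e) (Fin e × Fin e) ℂ) (q ^ 2)) := by
      rw [Algebra.algebraMap_eq_smul_one, ← hCC, ← pow_two]
      exact hCint.pow 2
    exact IsIntegral.of_pow two_pos
      ((isIntegral_algebraMap_iff (FaithfulSMul.algebraMap_injective _ _)).mp this)
  have hq' : q = algebraMap ℚ ℂ ((Fintype.card T : ℚ) / e) := by simp [q]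
  rw [hq', isIntegral_algebraMap_iff (algebraMap ℚ ℂ).injective] at hqint
  obtain ⟨n, hn⟩ := IsIntegrallyClosed.isIntegral_iff.mp hqint
  have he' : (e : ℚ) ≠ 0 := by exact_mod_cast NeZero.ne e
  rw [eq_div_iff he'] at hn
  have : (Fintype.card T : ℤ) = e * n := by
    have h4 : ((n : ℚ)) * e = Fintype.card T := hn
    rw [mul_comm]; exact_mod_cast h4.symm
  exact Int.natCast_dvd_natCast.mp ⟨n, this⟩

/-! ### Finite groups of automorphisms of a product of matrix algebras -/

/-- The product of full matrix algebras `∏ i, M_{d i}(ℂ)`. -/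
abbrev MatProd {n : ℕ} (d : Fin n → ℕ) : Type := Π i, Matrix (Fin (d i)) (Fin (d i)) ℂ

section
variable {n : ℕ} {d : Fin n → ℕ}

lemma single_mul_eq (i : Fin n) (x : Matrix (Fin (d i)) (Fin (d i)) ℂ) (y : MatProd d) :
    (Pi.single i x : MatProd d) * y = Pi.single i (x * y i) := by
  funext k
  by_cases h : k = i
  · subst h; simp
  · simp [h]

lemma mul_single_eq (i : Fin n) (x : Matrix (Fin (d i)) (Fin (d i)) ℂ) (y : MatProd d) :
    y * (Pi.single i x : MatProd d) = Pi.single i (y i * x) := by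
  funext k
  by_cases h : k = i
  · subst h; simp
  · simp [h]

/-- A central idempotent of `∏ i, M_{d i}(ℂ)` is `0` or `1` on each block. -/
lemma central_idem_apply [∀ i, NeZero (d i)] {u : MatProd d} (hc : ∀ x, x * u = u * x)
    (hu : u * u = u) (i : Fin n) : u i = 0 ∨ u i = 1 := by
  obtain ⟨c, hc⟩ := scalar_of_commute (M := u i) fun x => by
    have := congrFun (hc (Pi.single i x)) i
    simpa using this
  have h2 := congrFun hu i
  rw [Pi.mul_apply, hc] at h2
  have h3 : c * c = c := by
    have := congrFun (congrFun h2 0) 0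
    simpa using this
  rcases IsIdempotentElem.iff_eq_zero_or_one.mp h3 with h | h
  · left; rw [hc, h, zero_smul]
  · right; rw [hc, h, one_smul]

variable {Q : Type*} [Group Q] (α : Q →* (MatProd d ≃ₐ[ℂ] MatProd d))

/-- The elements of `Q` that fix the central idempotent of the `i`-th block. -/
def blockStabilizer (i : Fin n) : Subgroup Q where
  carrier := {q | α q (Pi.single i 1) = Pi.single i 1}
  one_mem' := by simp
  mul_mem' := by
    intro a b ha hb
    simp only [Set.mem_ofPred_eq] at *
    rw [map_mul, AlgEquiv.mul_apply, hb, ha]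
  inv_mem' := by
    intro a ha
    simp only [Set.mem_ofPred_eq] at *
    conv_lhs => rw [← ha]
    rw [← AlgEquiv.mul_apply, ← map_mul]; simp

lemma central_idem_map (q : Q) (i : Fin n) :
    (∀ x, x * α q (Pi.single i 1) = α q (Pi.single i 1) * x) ∧
      α q (Pi.single i 1) * α q (Pi.single i 1) = α q (Pi.single i 1) := by
  constructor
  · intro x
    have : x = α q (α q⁻¹ x) := by rw [← AlgEquiv.mul_apply, ← map_mul]; simp
    rw [this, ← map_mul, ← map_mul, single_mul_eq, mul_single_eq, mul_one, one_mul]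
  · rw [← map_mul, single_mul_eq]; simp

/-- An automorphism moving the `i`-th block sends it into the other blocks. -/
lemma apply_eq_zero_of_notMem [∀ i, NeZero (d i)] {q : Q} {i : Fin n}
    (hq : q ∉ blockStabilizer α i) (x : Matrix (Fin (d i)) (Fin (d i)) ℂ) :
    α q (Pi.single i x) i = 0 := by
  have hx : (Pi.single i x : MatProd d) = Pi.single i 1 * Pi.single i x := by
    rw [single_mul_eq]; simp
  rcases central_idem_apply (central_idem_map α q i).1 (central_idem_map α q i).2 i with h | h
  · rw [hx, map_mul, Pi.mul_apply, h, zero_mul]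
  · exfalso
    apply hq
    have hinv : ∀ y, α q⁻¹ (α q y) = y := fun y => by
      rw [← AlgEquiv.mul_apply, ← map_mul]; simp
    have hinv' : ∀ y, α q (α q⁻¹ y) = y := fun y => by
      rw [← AlgEquiv.mul_apply, ← map_mul]; simp
    have h1 : (Pi.single i 1 : MatProd d) * α q (Pi.single i 1) = Pi.single i 1 := by
      rw [single_mul_eq, h, mul_one]
    have h2 := congrArg (α q⁻¹) h1
    rw [map_mul, hinv, mul_single_eq, mul_one] at h2
    rcases central_idem_apply (central_idem_map α q⁻¹ i).1 (central_idem_map α q⁻¹ i).2 i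
      with h3 | h3
    · exfalso
      rw [h3, Pi.single_zero] at h2
      have := congrArg (α q) h2
      rw [hinv', map_zero] at this
      have := congrFun (congrFun (congrFun this i) 0) 0
      simp at this
    · rw [h3] at h2
      change α q _ = _
      conv_lhs => rw [h2]
      exact hinv' _

lemma apply_eq_single {q : Q} {i : Fin n}
    (hq : q ∈ blockStabilizer α i) (x : Matrix (Fin (d i)) (Fin (d i)) ℂ) :
    α q (Pi.single i x) = Pi.single i (α q (Pi.single i x) i) := by
  have hx : (Pi.single i x : MatProd d) = Pi.single i 1 * Pi.single i x := by
    rw [single_mul_eq]; simp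
  have hq' : α q (Pi.single i 1) = Pi.single i 1 := hq
  conv_lhs => rw [hx, map_mul, hq', single_mul_eq, one_mul]

/-- The endomorphism of the `i`-th block induced by an element of its stabilizer. -/
def blockAlgHom (i : Fin n) (t : blockStabilizer α i) :
    Matrix (Fin (d i)) (Fin (d i)) ℂ →ₐ[ℂ] Matrix (Fin (d i)) (Fin (d i)) ℂ :=
  AlgHom.ofLinearMap
    ((LinearMap.proj i).comp ((α t.1).toLinearMap.comp (LinearMap.single ℂ _ i)))
    (by
      have hq' : α t.1 (Pi.single i 1) = Pi.single i 1 := t.2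
      simp [hq'])
    (by
      intro x y
      have : (Pi.single i (x * y) : MatProd d) = Pi.single i x * Pi.single i y := by
        rw [single_mul_eq]; simp
      simp [this])

lemma blockAlgHom_apply (i : Fin n) (t : blockStabilizer α i)
    (x : Matrix (Fin (d i)) (Fin (d i)) ℂ) :
    blockAlgHom α i t x = α t.1 (Pi.single i x) i := rfl

lemma blockAlgHom_mul (i : Fin n) (s t : blockStabilizer α i)
    (x : Matrix (Fin (d i)) (Fin (d i)) ℂ) :
    blockAlgHom α i (s * t) x = blockAlgHom α i s (blockAlgHom α i t x) := by
  simp only [blockAlgHom_apply]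
  rw [← apply_eq_single α t.2, ← AlgEquiv.mul_apply, ← map_mul]; rfl

lemma blockAlgHom_one (i : Fin n) (x : Matrix (Fin (d i)) (Fin (d i)) ℂ) :
    blockAlgHom α i 1 x = x := by
  simp [blockAlgHom_apply]

/-- The action of the stabilizer of the `i`-th block on that block. -/
def blockAction (i : Fin n) : blockStabilizer α i →*
    (Matrix (Fin (d i)) (Fin (d i)) ℂ ≃ₐ[ℂ] Matrix (Fin (d i)) (Fin (d i)) ℂ) where
  toFun t := AlgEquiv.ofAlgHom (blockAlgHom α i t) (blockAlgHom α i t⁻¹)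
    (by
      ext1 x
      simp [← blockAlgHom_mul, blockAlgHom_one])
    (by
      ext1 x
      simp [← blockAlgHom_mul, blockAlgHom_one])
  map_one' := by ext1 x; exact blockAlgHom_one α i x
  map_mul' s t := by ext1 x; exact blockAlgHom_mul α i s t x

lemma blockAction_apply (i : Fin n) (t : blockStabilizer α i)
    (x : Matrix (Fin (d i)) (Fin (d i)) ℂ) :
    blockAction α i t x = α t.1 (Pi.single i x) i := rfl

/-- If all averages under `Q` are scalar, then the average of a primitive idempotent is an integral
scalar. Only the stabilizer of its block contributes to the `i`-th component, and there the scalar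
is the order of the stabilizer divided by `d i`. -/
lemma exists_nat_average_single [∀ i, NeZero (d i)] [Fintype Q]
    (h : ∀ x : MatProd d, ∃ c : ℂ, ∑ q, α q x = c • 1) (i : Fin n) (j : Fin (d i)) :
    ∃ m : ℕ, ∑ q, α q (Pi.single i (Matrix.single j j 1)) = (m : ℂ) • 1 := by
  classical
  have key : ∀ x (c : ℂ), ∑ q, α q (Pi.single i x) = c • 1 →
      ∑ t, blockAction α i t x = c • 1 := by
    intro x c hc
    have h1 := congrFun hc i
    rw [Finset.sum_apply] at h1
    simp only [blockAction_apply]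
    have h2 := Fintype.sum_subtype_add_sum_subtype (· ∈ blockStabilizer α i)
      (fun q => α q (Pi.single i x) i)
    have h3 : ∑ q : {q // q ∉ blockStabilizer α i}, α q.1 (Pi.single i x) i = 0 :=
      Finset.sum_eq_zero fun q _ => apply_eq_zero_of_notMem α q.2 x
    rw [h1, h3, add_zero] at h2
    exact h2
  have hdvd := dvd_card_of_average_scalar (blockAction α i) fun x => by
    obtain ⟨c, hc⟩ := h (Pi.single i x)
    exact ⟨c, key x c hc⟩
  obtain ⟨m, hm⟩ := hdvd
  obtain ⟨c, hc⟩ := h (Pi.single i (Matrix.single j j 1))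
  refine ⟨m, ?_⟩
  rw [hc]
  congr 1
  have htr := congrArg Matrix.trace (key _ c hc)
  rw [Matrix.trace_sum, Finset.sum_congr rfl fun t _ => trace_algEquiv _ _] at htr
  simp only [Finset.sum_const, Finset.card_univ, hm] at htr
  have : (d i : ℂ) ≠ 0 := by exact_mod_cast NeZero.ne (d i)
  apply mul_right_cancel₀ this
  simp at htr
  rw [← htr, mul_comm]
end

/-! ### Conjugation on the endomorphisms of a restricted representation -/

section
variable {G H : Type*} [Group G] [Group H]
  {V W : Type*} [AddCommGroup V] [Module ℂ V]
  [AddCommGroup W] [Module ℂ W]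
  (ρ : Representation ℂ G V) (f : H →* G)

/-- The pullback of `ρ` along `f`; for the inclusion of a subgroup, the restriction of `ρ`. -/
abbrev resHom : Representation ℂ H V := MonoidHom.comp ρ f

variable {f}

lemma rho_inv_apply (g : G) (v : V) : ρ g⁻¹ (ρ g v) = v := by
  rw [← Module.End.mul_apply, ← map_mul]; simp

lemma rho_apply_inv (g : G) (v : V) : ρ g (ρ g⁻¹ v) = v := by
  rw [← Module.End.mul_apply, ← map_mul]; simp

/-- Conjugation by `ρ g` of an endomorphism commuting with `f.range`. Normality of the range makes the
result commute with it again. -/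
def conjMap (hf : f.range.Normal) (g : G) (x : IntertwiningMap (resHom ρ f) (resHom ρ f)) :
    IntertwiningMap (resHom ρ f) (resHom ρ f) where
  toLinearMap := ρ g ∘ₗ x.toLinearMap ∘ₗ ρ g⁻¹
  isIntertwining' h := by
    obtain ⟨h', hh'⟩ := hf.conj_mem (f h) ⟨h, rfl⟩ g⁻¹
    have e1 : f h = g * f h' * g⁻¹ := by rw [hh']; group
    ext v
    have := IntertwiningMap.isIntertwining _ _ x h' (ρ g⁻¹ v)
    simp only [MonoidHom.comp_apply] at this
    simp only [LinearMap.comp_apply, MonoidHom.comp_apply, e1, map_mul, Module.End.mul_apply,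
      rho_inv_apply, IntertwiningMap.toLinearMap_apply, this]

@[simp] lemma conjMap_apply (hf : f.range.Normal) (g : G)
    (x : IntertwiningMap (resHom ρ f) (resHom ρ f)) (v : V) :
    conjMap ρ hf g x v = ρ g (x (ρ g⁻¹ v)) := rfl

/-- `conjMap` as an algebra endomorphism. -/
def conjAlgHom (hf : f.range.Normal) (g : G) :
    IntertwiningMap (resHom ρ f) (resHom ρ f) →ₐ[ℂ] IntertwiningMap (resHom ρ f) (resHom ρ f) :=
  AlgHom.ofLinearMap
    { toFun := conjMap ρ hf g
      map_add' := fun x y => by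
        refine DFunLike.ext _ _ fun v => ?_
        simp
      map_smul' := fun c x => by
        refine DFunLike.ext _ _ fun v => ?_
        simp }
    (by
      refine DFunLike.ext _ _ fun v => ?_
      simp)
    (fun x y => by
      refine DFunLike.ext _ _ fun v => ?_
      simp)

@[simp] lemma conjAlgHom_apply (hf : f.range.Normal) (g : G)
    (x : IntertwiningMap (resHom ρ f) (resHom ρ f)) (v : V) :
    conjAlgHom ρ hf g x v = ρ g (x (ρ g⁻¹ v)) := rfl

/-- The conjugation action of `G` on the endomorphism algebra of the pulled-back representation. -/
def conjAction (hf : f.range.Normal) : G →*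
    (IntertwiningMap (resHom ρ f) (resHom ρ f) ≃ₐ[ℂ]
      IntertwiningMap (resHom ρ f) (resHom ρ f)) where
  toFun g := AlgEquiv.ofAlgHom (conjAlgHom ρ hf g) (conjAlgHom ρ hf g⁻¹)
    (by
      refine AlgHom.ext fun x => DFunLike.ext _ _ fun v => ?_
      simp)
    (by
      refine AlgHom.ext fun x => DFunLike.ext _ _ fun v => ?_
      have := rho_inv_apply ρ g
      simp [this])
  map_one' := by
    refine AlgEquiv.ext fun x => DFunLike.ext _ _ fun v => ?_
    simp
  map_mul' g h := by
    refine AlgEquiv.ext fun x => DFunLike.ext _ _ fun v => ?_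
    simp

@[simp] lemma conjAction_apply (hf : f.range.Normal) (g : G)
    (x : IntertwiningMap (resHom ρ f) (resHom ρ f)) (v : V) :
    conjAction ρ hf g x v = ρ g (x (ρ g⁻¹ v)) := rfl

lemma range_sup_ker_le (hf : f.range.Normal) :
    f.range ⊔ MonoidHom.ker ρ ≤ (conjAction ρ hf).ker := by
  refine sup_le ?_ ?_
  · rintro _ ⟨h, rfl⟩
    refine AlgEquiv.ext fun x => DFunLike.ext _ _ fun v => ?_
    have := IntertwiningMap.isIntertwining _ _ x h (ρ (f h)⁻¹ v)
    simp only [MonoidHom.comp_apply, rho_apply_inv] at this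
    simp [this]
  · intro k hk
    refine AlgEquiv.ext fun x => DFunLike.ext _ _ fun v => ?_
    have hk' : ρ k = 1 := hk
    have hk2 : ρ k⁻¹ = 1 := (MonoidHom.ker ρ).inv_mem hk
    simp [hk', hk2]

lemma conj_trace (hf : f.range.Normal) (g : G)
    (x : IntertwiningMap (resHom ρ f) (resHom ρ f)) :
    LinearMap.trace ℂ V (conjAction ρ hf g x).toLinearMap
      = LinearMap.trace ℂ V x.toLinearMap := by
  change LinearMap.trace ℂ V (ρ g * (x.toLinearMap * ρ g⁻¹)) = _
  rw [LinearMap.trace_mul_comm, mul_assoc, ← map_mul]; simp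

/-- Schur's lemma: an endomorphism fixed by conjugation commutes with the whole of `G`. -/
lemma exists_scalar_of_fixed [FiniteDimensional ℂ V] [IsIrreducible ρ] (hf : f.range.Normal)
    (x : IntertwiningMap (resHom ρ f) (resHom ρ f)) (hx : ∀ g, conjAction ρ hf g x = x) :
    ∃ c : ℂ, x = c • 1 := by
  let y : IntertwiningMap ρ ρ :=
    { toLinearMap := x.toLinearMap
      isIntertwining' := fun g => by
        ext v
        have := DFunLike.congr_fun (hx g) (ρ g v)
        rw [conjAction_apply, rho_inv_apply] at this
        exact this.symm }
  obtain ⟨c, hc⟩ :=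
    (IsIrreducible.algebraMap_intertwiningMap_bijective_of_isAlgClosed (ρ := ρ)).2 y
  refine ⟨c, DFunLike.ext _ _ fun v => ?_⟩
  have := DFunLike.congr_fun hc v
  exact this.symm

/-- Maschke's theorem for intertwining maps. -/
lemma exists_retraction [Finite H] {σ : Representation ℂ H W} {τ : Representation ℂ H V}
    (S : IntertwiningMap σ τ) (hS : Function.Injective S) :
    ∃ r : IntertwiningMap τ σ, ∀ w, r (S w) = w := by
  let S' := IntertwiningMap.equivLinearMapAsModule σ τ S
  have : NeZero (Nat.card H : ℂ) := ⟨by exact_mod_cast Nat.card_pos.ne'⟩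
  obtain ⟨g, hg⟩ := MonoidAlgebra.exists_leftInverse_of_injective S'
    (LinearMap.ker_eq_bot.mpr hS)
  refine ⟨(IntertwiningMap.equivLinearMapAsModule τ σ).symm g, fun w => ?_⟩
  exact LinearMap.congr_fun hg w

/-- The endomorphism algebra of a complex representation of a finite group is semisimple, so it is a
product of matrix algebras by Wedderburn's theorem. -/
lemma exists_matProd_equiv [FiniteDimensional ℂ V] [Finite H] (τ : Representation ℂ H V) :
    ∃ (n : ℕ) (d : Fin n → ℕ), (∀ i, NeZero (d i)) ∧
      Nonempty (IntertwiningMap τ τ ≃ₐ[ℂ] MatProd d) := by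
  have : NeZero (Nat.card H : ℂ) := ⟨by exact_mod_cast Nat.card_pos.ne'⟩
  have : IsSemisimpleModule (MonoidAlgebra ℂ H) τ.asModule := inferInstance
  have : FiniteDimensional ℂ τ.asModule := inferInstanceAs (FiniteDimensional ℂ V)
  have : Module.Finite (MonoidAlgebra ℂ H) τ.asModule := Module.Finite.of_restrictScalars_finite ℂ _ _
  have := IsSemisimpleRing.moduleEnd (MonoidAlgebra ℂ H) τ.asModule
  have : FiniteDimensional ℂ (Module.End (MonoidAlgebra ℂ H) τ.asModule) :=
    Module.Finite.equiv (IntertwiningMap.equivAlgEnd (ρ := τ)).toLinearEquiv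
  obtain ⟨n, d, hd, ⟨e⟩⟩ := IsSemisimpleRing.exists_algEquiv_pi_matrix_of_isAlgClosed ℂ
    (Module.End (MonoidAlgebra ℂ H) τ.asModule)
  exact ⟨n, d, hd, ⟨(IntertwiningMap.equivAlgEnd (ρ := τ)).trans e⟩⟩

/-- If `V` is irreducible and `W` is a constituent of its restriction to a normal subgroup `N`, then
`dim V` divides `|G : N ker ρ| * dim W`. The primitive idempotents of `End_N(V)` are projections
onto irreducible constituents. Averaging one that projects onto a copy of `W` over `G / N ker ρ`
gives an integer multiple of the identity, and the result follows by taking traces. -/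
theorem finrank_dvd_index_mul [Finite G] [Finite H] [FiniteDimensional ℂ V]
    [FiniteDimensional ℂ W] [IsIrreducible ρ] (hf : f.range.Normal)
    {σ : Representation ℂ H W} [IsIrreducible σ] (T : IntertwiningMap σ (resHom ρ f))
    (hT : T ≠ 0) :
    Module.finrank ℂ V ∣ (f.range ⊔ MonoidHom.ker ρ).index * Module.finrank ℂ W := by
  classical
  obtain ⟨n, d, hd, ⟨Φ⟩⟩ := exists_matProd_equiv (resHom ρ f)
  let E : (i : Fin n) → Fin (d i) → IntertwiningMap (resHom ρ f) (resHom ρ f) :=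
    fun i j => Φ.symm (Pi.single i (Matrix.single j j 1))
  have hEsum : ∑ i, ∑ j, E i j = 1 := by
    simp only [E, ← map_sum]
    rw [← map_one Φ.symm]
    congr 1
    funext k
    rw [Finset.sum_apply, Finset.sum_eq_single k]
    · simp only [Finset.sum_apply, Pi.single_eq_same, Pi.one_apply]
      exact Matrix.sum_single_one
    · intro b _ hb
      simp [Finset.sum_apply, Pi.single_eq_of_ne hb.symm]
    · simp
  have hEE : ∀ i j, E i j * E i j = E i j := fun i j => by
    simp only [E]
    rw [← map_mul, single_mul_eq]
    simp
  have hErE : ∀ i j x, ∃ c : ℂ, E i j * x * E i j = c • E i j := fun i j x => by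
    refine ⟨Φ x i j j, ?_⟩
    apply Φ.injective
    simp only [E, map_mul, map_smul, AlgEquiv.apply_symm_apply]
    rw [single_mul_eq, single_mul_eq, ← Pi.single_smul]
    congr 1
    simp [Matrix.single_mul_mul_single]
  obtain ⟨i, j, hij⟩ : ∃ i j, (E i j).comp T ≠ 0 := by
    by_contra! h
    apply hT
    refine DFunLike.ext _ _ fun w => ?_
    have h1 : T w = (∑ i, ∑ j, E i j) (T w) := by rw [hEsum]; rfl
    rw [h1, IntertwiningMap.sum_apply]
    refine Finset.sum_eq_zero fun i _ => ?_
    rw [IntertwiningMap.sum_apply]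
    exact Finset.sum_eq_zero fun j _ => DFunLike.congr_fun (h i j) w
  set S := (E i j).comp T with hSdef
  have hSinj : Function.Injective S :=
    (IsIrreducible.injective_or_eq_zero S).resolve_right hij
  have hES : ∀ w, E i j (S w) = S w := fun w =>
    DFunLike.congr_fun (hEE i j) (T w)
  obtain ⟨r, hr⟩ := exists_retraction S hSinj
  -- Primitivity makes the image of `E i j` no larger than the copy of `W` it contains.
  have hrange : LinearMap.range (E i j).toLinearMap = LinearMap.range S.toLinearMap := by
    apply le_antisymm
    · rintro _ ⟨v, rfl⟩
      obtain ⟨c, hc⟩ := hErE i j (S.comp r)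
      have hc' : ∀ v, E i j (S (r (E i j v))) = c • E i j v := fun v =>
        DFunLike.congr_fun hc v
      obtain ⟨w, hw⟩ : ∃ w, S w ≠ 0 := by
        by_contra! h
        exact hij (DFunLike.ext _ _ h)
      have hc1 : c = 1 := by
        have := hc' (S w)
        rw [hES, hES, hr] at this
        have h2 : (c - 1) • S w = 0 := by rw [sub_smul, one_smul, ← this, sub_self]
        exact sub_eq_zero.mp ((smul_eq_zero.mp h2).resolve_right hw)
      have := hc' v
      rw [hc1, one_smul, hES] at this
      exact ⟨r (E i j v), this⟩
    · rintro _ ⟨w, rfl⟩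
      exact ⟨S w, hES w⟩
  have htrace : LinearMap.trace ℂ V (E i j).toLinearMap = Module.finrank ℂ W := by
    have hid : IsIdempotentElem (E i j).toLinearMap :=
      LinearMap.ext fun v => DFunLike.congr_fun (hEE i j) v
    rw [(LinearMap.isProj_range_iff_isIdempotentElem _ |>.mpr hid).trace, hrange,
      LinearMap.finrank_range_of_inj hSinj]
  let N := f.range ⊔ MonoidHom.ker ρ
  have hN : N.Normal := Subgroup.sup_normal _ _
  let α₀ : G ⧸ N →* (IntertwiningMap (resHom ρ f) (resHom ρ f) ≃ₐ[ℂ]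
      IntertwiningMap (resHom ρ f) (resHom ρ f)) :=
    QuotientGroup.lift N (conjAction ρ hf) (range_sup_ker_le ρ hf)
  have hα₀ : ∀ g : G, α₀ g = conjAction ρ hf g := fun g => rfl
  have hα₀' : ∀ q x, LinearMap.trace ℂ V (α₀ q x).toLinearMap
      = LinearMap.trace ℂ V x.toLinearMap := by
    intro q x
    induction q using QuotientGroup.induction_on with
    | H g => rw [hα₀, conj_trace]
  have := Fintype.ofFinite (G ⧸ N)
  have hscal : ∀ x, ∃ c : ℂ, ∑ q, α₀ q x = c • 1 := fun x => by
    apply exists_scalar_of_fixed ρ hf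
    intro g
    rw [← hα₀, map_sum]
    refine Fintype.sum_equiv (Equiv.mulLeft (g : G ⧸ N)) _ _ fun q => ?_
    rw [← AlgEquiv.mul_apply, ← map_mul]; rfl
  let α : G ⧸ N →* (MatProd d ≃ₐ[ℂ] MatProd d) :=
    { toFun := fun q => (Φ.symm.trans (α₀ q)).trans Φ
      map_one' := by ext1 x; simp
      map_mul' := fun a b => by ext1 x; simp }
  have hα : ∀ q x, α q x = Φ (α₀ q (Φ.symm x)) := fun q x => rfl
  obtain ⟨m, hm⟩ := exists_nat_average_single α (fun x => by
    obtain ⟨c, hc⟩ := hscal (Φ.symm x)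
    refine ⟨c, ?_⟩
    simp only [hα]
    rw [← map_sum, hc, map_smul, map_one]) i j
  have hm' : ∑ q, α₀ q (E i j) = (m : ℂ) • 1 := by
    apply Φ.injective
    rw [map_sum, map_smul, map_one, ← hm]
    rfl
  refine ⟨m, ?_⟩
  have htr := congrArg (fun x => LinearMap.trace ℂ V (IntertwiningMap.toLinearMap x)) hm'
  simp only [IntertwiningMap.toLinearMap_sum, map_sum, hα₀', htrace] at htr
  have hone : LinearMap.trace ℂ V
      (((m : ℂ) • (1 : IntertwiningMap (resHom ρ f) (resHom ρ f))).toLinearMap)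
      = m * Module.finrank ℂ V := by
    have : ((m : ℂ) • (1 : IntertwiningMap (resHom ρ f) (resHom ρ f))).toLinearMap
      = (m : ℂ) • (1 : Module.End ℂ V) := rfl
    rw [this, map_smul, LinearMap.trace_one, smul_eq_mul]
  rw [hone] at htr
  rw [Subgroup.index_eq_card, Nat.card_eq_fintype_card, mul_comm _ m]
  simp only [Finset.sum_const, Finset.card_univ, nsmul_eq_mul] at htr
  exact_mod_cast htr
end

/-! ### Irreducibility and codegrees over a normal subgroup -/

section
variable {G H : Type*} [Group G] [Group H]
  {V W : Type*} [AddCommGroup V] [Module ℂ V]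
  [AddCommGroup W] [Module ℂ W]

lemma nontrivial_of_isIrreducible (ρ : Representation ℂ G V) [IsIrreducible ρ] :
    Nontrivial V := by
  by_contra h
  rw [not_nontrivial_iff_subsingleton] at h
  obtain ⟨a, b, hab⟩ := (inferInstance : IsIrreducible ρ).exists_pair_ne
  refine hab (SetLike.ext fun x => ?_)
  rw [Subsingleton.elim x 0]
  exact ⟨fun _ => b.toSubmodule.zero_mem, fun _ => a.toSubmodule.zero_mem⟩

/-- Maschke's theorem turns the converse of Schur's lemma into an irreducibility criterion: the
projection onto a nonzero invariant subspace is a scalar, hence the identity. -/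
lemma isIrreducible_of_finrank_end [Finite G] (ρ : Representation ℂ G V)
    (h : Module.finrank ℂ (IntertwiningMap ρ ρ) = 1) : IsIrreducible ρ := by
  have hone : (1 : IntertwiningMap ρ ρ) ≠ 0 := by
    intro h1
    have : Subsingleton (IntertwiningMap ρ ρ) := subsingleton_of_zero_eq_one h1.symm
    rw [Module.finrank_zero_of_subsingleton] at h
    exact zero_ne_one h
  have hnt : Nontrivial V := by
    by_contra hV
    rw [not_nontrivial_iff_subsingleton] at hV
    exact hone (DFunLike.ext _ _ fun v => Subsingleton.elim _ _)
  refine { exists_pair_ne := ⟨⊥, ⊤, fun h1 => ?_⟩, eq_bot_or_eq_top := fun U => ?_ }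
  · have := congrArg Subrepresentation.toSubmodule h1
    exact bot_ne_top this
  · by_cases hU : U.toSubmodule = ⊥
    · exact Or.inl (Subrepresentation.toSubmodule_injective hU)
    · right
      obtain ⟨u, hu, hu0⟩ := Submodule.exists_mem_ne_zero_of_ne_bot hU
      let S : IntertwiningMap U.toRepresentation ρ :=
        { toLinearMap := U.toSubmodule.subtype
          isIntertwining' := fun g => rfl }
      obtain ⟨r, hr⟩ := exists_retraction S U.toSubmodule.injective_subtype
      obtain ⟨c, hc⟩ := (finrank_eq_one_iff_of_nonzero' _ hone).mp h (S.comp r)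
      have hc' : ∀ v, c • v = (r v : V) := fun v => DFunLike.congr_fun hc v
      have h1 : (r u : V) = u := congrArg Subtype.val (hr ⟨u, hu⟩)
      have hc1 : c = 1 := by
        have h2 := hc' u
        rw [h1] at h2
        have h3 : (c - 1) • u = 0 := by rw [sub_smul, h2, one_smul, sub_self]
        exact sub_eq_zero.mp ((smul_eq_zero.mp h3).resolve_right hu0)
      apply Subrepresentation.toSubmodule_injective
      refine (eq_top_iff.mpr fun v _ => ?_ : U.toSubmodule = ⊤)
      have := hc' v
      rw [hc1, one_smul] at this
      rw [this]
      exact (r v).2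

/-- The degree of an irreducible representation divides the index of its kernel. -/
lemma finrank_dvd_index_ker [Finite G] [FiniteDimensional ℂ V] (ρ : Representation ℂ G V)
    [IsIrreducible ρ] : Module.finrank ℂ V ∣ (MonoidHom.ker ρ).index := by
  have := nontrivial_of_isIrreducible ρ
  obtain ⟨v, hv⟩ := exists_ne (0 : V)
  -- Apply the divisibility to the trivial subgroup, where every line is a constituent.
  let σ : Representation ℂ Unit ℂ := 1
  have hσ : IsIrreducible σ := by
    refine { exists_pair_ne := ⟨⊥, ⊤, fun h1 => ?_⟩, eq_bot_or_eq_top := fun U => ?_ }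
    · have := congrArg Subrepresentation.toSubmodule h1
      exact bot_ne_top this
    · exact (eq_bot_or_eq_top U.toSubmodule).imp
        (fun h => Subrepresentation.toSubmodule_injective h)
        (fun h => Subrepresentation.toSubmodule_injective h)
  have hr : (1 : Unit →* G).range = ⊥ := MonoidHom.range_one
  let T : IntertwiningMap σ (resHom ρ (1 : Unit →* G)) :=
    { toLinearMap := LinearMap.toSpanSingleton ℂ V v
      isIntertwining' := fun g => by ext; simp [σ] }
  have hT : T ≠ 0 := fun h => hv (by
    have := DFunLike.congr_fun h (1 : ℂ)
    simpa [T] using this)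
  have := finrank_dvd_index_mul ρ (by rw [hr]; infer_instance) T hT
  simpa [hr] using this

/-- The codegree `|G : ker ρ| / deg ρ` of a representation. -/
noncomputable def codeg (ρ : Representation ℂ G V) : ℕ :=
  (MonoidHom.ker ρ).index / Module.finrank ℂ V

/-- The case of a normal subgroup. With `N = f.range`, `D = dim V` and `d = dim W`, the codegree of
`ρ` is that of `σ` times the index of `f⁻¹(ker ρ)` in `ker σ` times the integer
`|G : N ker ρ| * d / D`. -/
theorem codeg_dvd_of_normal_range [Finite G] [Finite H] [FiniteDimensional ℂ V]
    [FiniteDimensional ℂ W] (ρ : Representation ℂ G V) [IsIrreducible ρ] {f : H →* G}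
    (hf : f.range.Normal) (σ : Representation ℂ H W) [IsIrreducible σ]
    (T : IntertwiningMap σ (resHom ρ f)) (hT : T ≠ 0) : codeg σ ∣ codeg ρ := by
  have hinj : Function.Injective T := (IsIrreducible.injective_or_eq_zero T).resolve_right hT
  have := nontrivial_of_isIrreducible ρ
  have := nontrivial_of_isIrreducible σ
  have hD : 0 < Module.finrank ℂ V := Module.finrank_pos
  have hd : 0 < Module.finrank ℂ W := Module.finrank_pos
  obtain ⟨a, ha⟩ := finrank_dvd_index_ker σ
  obtain ⟨c, hc⟩ := finrank_dvd_index_mul ρ hf T hT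
  -- As `T` is injective, whatever acts trivially on `V` acts trivially on `W`.
  have hle : (MonoidHom.ker ρ).comap f ≤ MonoidHom.ker σ := by
    intro h hh
    have hh' : ρ (f h) = 1 := hh
    refine LinearMap.ext fun w => hinj ?_
    have := IntertwiningMap.isIntertwining _ _ T h w
    rw [this]
    simp [hh']
  have h1 := Subgroup.relIndex_mul_index hle
  have h2 := Subgroup.relIndex_mul_index (le_sup_right : MonoidHom.ker ρ ≤ f.range ⊔ _)
  rw [Subgroup.index_comap] at h1
  rw [Subgroup.relIndex_sup_right] at h2
  have h3 : (MonoidHom.ker ρ).index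
      = Module.finrank ℂ V * (((MonoidHom.ker ρ).comap f).relIndex (MonoidHom.ker σ) * a * c) := by
    rw [← h2, ← h1, ha]
    calc _ = ((MonoidHom.ker ρ).comap f).relIndex (MonoidHom.ker σ) * a *
          ((f.range ⊔ MonoidHom.ker ρ).index * Module.finrank ℂ W) := by ring
      _ = _ := by rw [hc]; ring
  rw [codeg, codeg, h3, ha, Nat.mul_div_cancel_left _ hd, Nat.mul_div_cancel_left _ hD]
  exact ⟨((MonoidHom.ker ρ).comap f).relIndex (MonoidHom.ker σ) * c, by ring⟩

end

/-! ### Descent along a subnormal chain -/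

section
universe u
variable {K : Type*} [Group K] [Finite K] {V : Type u} [AddCommGroup V] [Module ℂ V]

/-- By Maschke's theorem, every nonzero vector of a representation of a finite group survives in
the projection to some irreducible constituent. -/
lemma exists_irreducible_constituent [FiniteDimensional ℂ V] (τ : Representation ℂ K V) (v : V)
    (hv : v ≠ 0) :
    ∃ (Y : Type u) (_ : AddCommGroup Y) (_ : Module ℂ Y) (_ : FiniteDimensional ℂ Y)
      (η : Representation ℂ K Y) (_ : IsIrreducible η) (ι : IntertwiningMap η τ)
      (p : IntertwiningMap τ η), ι ≠ 0 ∧ p v ≠ 0 := by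
  classical
  have : NeZero (Nat.card K : ℂ) := ⟨by exact_mod_cast Nat.card_pos.ne'⟩
  have : IsSemisimpleModule (MonoidAlgebra ℂ K) τ.asModule := inferInstance
  obtain ⟨s, e, -, hs⟩ :=
    IsSemisimpleModule.exists_linearEquiv_dfinsupp (MonoidAlgebra ℂ K) τ.asModule
  obtain ⟨i, hi⟩ : ∃ i, e v i ≠ 0 := by
    by_contra! h
    exact hv (e.map_eq_zero_iff.mp (DFinsupp.ext h))
  let U : Subrepresentation τ :=
    Subrepresentation.subrepresentationSubmoduleOrderIso.symm i.1
  let ι : IntertwiningMap U.toRepresentation τ :=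
    { toLinearMap := U.toSubmodule.subtype
      isIntertwining' := fun g => rfl }
  let p₀ : τ.asModule →ₗ[MonoidAlgebra ℂ K] τ.asModule :=
    i.1.subtype ∘ₗ DFinsupp.lapply i ∘ₗ e.toLinearMap
  let p₁ := (IntertwiningMap.equivLinearMapAsModule τ τ).symm p₀
  let p : IntertwiningMap τ U.toRepresentation :=
    { toLinearMap := p₁.toLinearMap.codRestrict U.toSubmodule fun x => (e x i).2
      isIntertwining' := fun g => by
        ext x
        exact IntertwiningMap.isIntertwining _ _ p₁ g x }
  refine ⟨U.toSubmodule, inferInstance, inferInstance, inferInstance, U.toRepresentation, ?_, ι, p,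
    ?_, ?_⟩
  · have hatom : IsAtom i.1 := isSimpleModule_iff_isAtom.mp (hs i)
    refine { exists_pair_ne := ⟨⊥, ⊤, fun h => ?_⟩, eq_bot_or_eq_top := fun X => ?_ }
    · have h1 : (⊥ : Submodule ℂ U.toSubmodule) = ⊤ := congrArg Subrepresentation.toSubmodule h
      have h2 : p v ∈ (⊥ : Submodule ℂ U.toSubmodule) := by
        rw [h1]; trivial
      exact hi (Subtype.ext (congrArg Subtype.val ((Submodule.mem_bot ℂ).mp h2)))
    · let X' : Subrepresentation τ :=
        { toSubmodule := X.toSubmodule.map U.toSubmodule.subtype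
          apply_mem_toSubmodule := by
            rintro g _ ⟨x, hx, rfl⟩
            exact ⟨U.toRepresentation g x, X.apply_mem_toSubmodule g hx, rfl⟩ }
      have hle : X'.asSubmodule ≤ i.1 := by
        rintro _ ⟨x, -, rfl⟩
        exact x.2
      rcases hatom.le_iff.mp hle with h | h
      · left
        apply Subrepresentation.toSubmodule_injective
        refine (eq_bot_iff.mpr fun x hx => ?_ : X.toSubmodule = ⊥)
        have h1 : (x : V) ∈ X'.asSubmodule := ⟨x, hx, rfl⟩
        rw [h] at h1
        exact Subtype.ext ((Submodule.mem_bot (MonoidAlgebra ℂ K) (M := τ.asModule)).mp h1)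
      · right
        apply Subrepresentation.toSubmodule_injective
        refine (eq_top_iff.mpr fun x _ => ?_ : X.toSubmodule = ⊤)
        have h1 : (x : V) ∈ X'.asSubmodule := by rw [h]; exact x.2
        obtain ⟨y, hy, hyx⟩ := h1
        rwa [← Subtype.ext hyx]
  · intro h
    exact hi (Subtype.ext (DFunLike.congr_fun h (p v)))
  · intro h
    exact hi (Subtype.ext (congrArg Subtype.val h))

end

section
variable {G : Type*} [Group G] [Finite G] {V : Type} [AddCommGroup V] [Module ℂ V]
  [FiniteDimensional ℂ V] (ρ : Representation ℂ G V)

/-- Every irreducible constituent of the restriction of `ρ` to `H` has codegree dividing the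
codegree of `ρ`. -/
def CodegreeDvd (H : Subgroup G) : Prop :=
  ∀ (W : Type) [AddCommGroup W] [Module ℂ W] [FiniteDimensional ℂ W]
    (σ : Representation ℂ H W) [IsIrreducible σ]
    (T : IntertwiningMap σ (resHom ρ H.subtype)), T ≠ 0 → codeg σ ∣ codeg ρ

lemma codegreeDvd_top [IsIrreducible ρ] : CodegreeDvd ρ ⊤ := by
  intro W _ _ _ σ _ T hT
  exact codeg_dvd_of_normal_range ρ (by rw [Subgroup.range_subtype]; infer_instance) σ T hT

/-- A constituent of `V` restricted to `H` lies over `H` in some constituent of `V` restricted to `K`,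
so the property descends along a normal inclusion. -/
lemma CodegreeDvd.of_normalIn {H K : Subgroup G} (hHK : NormalIn H K) (hK : CodegreeDvd ρ K) :
    CodegreeDvd ρ H := by
  intro W _ _ _ σ _ T hT
  obtain ⟨w, hw⟩ : ∃ w, T w ≠ 0 := by
    by_contra! h
    exact hT (DFunLike.ext _ _ h)
  obtain ⟨Y, _, _, _, η, _, ι, p, hι, hp⟩ :=
    exists_irreducible_constituent (resHom ρ K.subtype) (T w) hw
  have hn : (Subgroup.inclusion hHK.1).range.Normal := by
    rw [Subgroup.inclusion_range]
    exact ⟨fun h hh k => hHK.2 k k.2 h hh⟩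
  let T' : IntertwiningMap σ (resHom η (Subgroup.inclusion hHK.1)) :=
    { toLinearMap := p.toLinearMap ∘ₗ T.toLinearMap
      isIntertwining' := fun h => by
        ext x
        have h1 := IntertwiningMap.isIntertwining _ _ T h x
        have h2 := IntertwiningMap.isIntertwining _ _ p (Subgroup.inclusion hHK.1 h) (T x)
        exact (congrArg p h1).trans h2 }
  have hT' : T' ≠ 0 := fun h => hp (DFunLike.congr_fun h w)
  exact (codeg_dvd_of_normal_range η hn σ T' hT').trans (hK Y η ι hι)

lemma CodegreeDvd.of_isSubnormal [IsIrreducible ρ] {M : Subgroup G} (hM : IsSubnormal M) :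
    CodegreeDvd ρ M := by
  obtain ⟨n, c, rfl, hlast, hc⟩ := hM
  have key : ∀ i : Fin (n + 1), CodegreeDvd ρ (c i) := by
    intro i
    induction i using Fin.reverseInduction with
    | last => rw [hlast]; exact codegreeDvd_top ρ
    | cast i ih => exact ih.of_normalIn ρ (hc i)
  exact key 0

end

/-! ### Characters and simple objects -/

section
variable {G : Type*} [Group G] [Finite G]

open Matrix ComplexOrder in
/-- A complex character takes conjugate values at inverse elements: the positive definite matrix
`∑ g, (R g)ᴴ * R g` is an invariant hermitian form. -/
lemma star_character {V : Type*} [AddCommGroup V] [Module ℂ V] [FiniteDimensional ℂ V]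
    (ρ : Representation ℂ G V) (g : G) :
    starRingEnd ℂ (ρ.character g) = ρ.character g⁻¹ := by
  classical
  have := Fintype.ofFinite G
  let b := Module.finBasis ℂ V
  let R : G → Matrix _ _ ℂ := fun g => LinearMap.toMatrix b b (ρ g)
  have hmul : ∀ g h, R (g * h) = R g * R h := fun g h => by
    simp only [R, map_mul, LinearMap.toMatrix_mul]
  have hone : R 1 = 1 := by simp [R]
  have htr : ∀ g, ρ.character g = (R g).trace := fun g =>
    LinearMap.trace_eq_matrix_trace ℂ b (ρ g)
  let P := ∑ g, (R g)ᴴ * R g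
  have hP : P.PosDef := by
    have : P = (R 1)ᴴ * R 1 + ∑ g ∈ Finset.univ.erase 1, (R g)ᴴ * R g :=
      (Finset.add_sum_erase _ _ (Finset.mem_univ _)).symm
    rw [this, hone]
    refine PosDef.add_posSemidef (by simpa using PosDef.one) ?_
    exact posSemidef_sum _ fun i _ => posSemidef_conjTranspose_mul_self _
  have hinv : (R g)ᴴ * P * R g = P := by
    simp only [P, Finset.mul_sum, Finset.sum_mul]
    refine Fintype.sum_equiv (Equiv.mulRight g) _ _ fun x => ?_
    simp [hmul, Matrix.mul_assoc, conjTranspose_mul]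
  have hcomm : (R g)ᴴ * P = P * R g⁻¹ := by
    conv_rhs => rw [← hinv]
    rw [Matrix.mul_assoc, ← hmul]
    simp [hone]
  have hdet : IsUnit P.det := (Matrix.isUnit_iff_isUnit_det _).mp hP.isUnit
  have h2 : (R g)ᴴ = P * R g⁻¹ * P⁻¹ := by
    rw [← hcomm, Matrix.mul_nonsing_inv_cancel_right _ _ hdet]
  rw [htr, htr, starRingEnd_apply, ← trace_conjTranspose, h2, trace_mul_comm, ← Matrix.mul_assoc,
    Matrix.nonsing_inv_mul _ hdet, Matrix.one_mul]

/-- A simple object has character norm one, hence a one-dimensional endomorphism algebra. -/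
lemma isIrreducible_of_simple {G : Type} [Group G] [Finite G] (V : FDRep ℂ G) (hV : Simple V) :
    IsIrreducible (V := V) V.ρ := by
  have := Fintype.ofFinite G
  have hcard : (Nat.card G : ℂ) ≠ 0 := by exact_mod_cast Nat.card_pos.ne'
  have := invertibleOfNonzero hcard
  have : NeZero (Nat.card G : ℂ) := ⟨hcard⟩
  apply isIrreducible_of_finrank_end
  have h1 := (FDRep.simple_iff_char_is_norm_one V).mp hV
  have h2 := Representation.card_inv_mul_sum_char_mul_char_eq_finrank (V := V) (W := V) V.ρ V.ρ
  have h3 : ∑ g, Representation.character (V := V) V.ρ g *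
      Representation.character (V := V) V.ρ g⁻¹ = (Nat.card G : ℂ) := h1
  rw [h3, inv_mul_cancel₀ hcard] at h2
  exact_mod_cast h2.symm

end

end

/-- If `M` is subnormal in `G` and `ψ` is an irreducible constituent of the restriction
to `M` of an irreducible character `χ` of `G`, then `a(ψ)` divides `a(χ)`. -/
theorem codegree_dvd_of_subnormal_constituent {G : Type} [Group G] [Finite G]
    (M : Subgroup G) (hM : IsSubnormal M)
    (V : FDRep ℂ G) (hV : Simple V) (W : FDRep ℂ M) (hW : Simple W)
    (hcons : charInner (fun m : M => V.character (m : G)) W.character ≠ 0) :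
    codegree W ∣ codegree V := by
  have := Fintype.ofFinite M
  have hcard : (Nat.card M : ℂ) ≠ 0 := by exact_mod_cast Nat.card_pos.ne'
  have := invertibleOfNonzero hcard
  have hVi := isIrreducible_of_simple V hV
  have hWi := isIrreducible_of_simple W hW
  -- The inner product of the characters is the dimension of the space of intertwining maps.
  have hfin := Representation.card_inv_mul_sum_char_mul_char_eq_finrank (V := W) (W := V)
    W.ρ (resHom (V := V) V.ρ M.subtype)
  have hinner : charInner (fun m : M => V.character (m : G)) W.character
      = (Module.finrank ℂ (Representation.IntertwiningMap (V := W) (W := V) W.ρ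
        (resHom (V := V) V.ρ M.subtype)) : ℂ) := by
    rw [← hfin, charInner, finsum_eq_sum_of_fintype]
    congr 1
    refine Finset.sum_congr rfl fun m _ => ?_
    congr 1
    exact star_character (V := W) W.ρ m
  rw [hinner, Nat.cast_ne_zero, ← Nat.pos_iff_ne_zero, Module.finrank_pos_iff_exists_ne_zero]
    at hcons
  obtain ⟨T, hT⟩ := hcons
  exact CodegreeDvd.of_isSubnormal (V := V) V.ρ hM W W.ρ T hT
end

section
/- Let G be a finite group and p a prime dividing |G|. Then there exists an irreducible complex character χ of G such that p divides the codegree a(χ) = |G : ker χ| / χ(1). -/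
/-!
Suppose that `p` divides no codegree. The degree of an irreducible representation divides the index
of its kernel (`finrank_dvd_index_ker`), so `p` divides the degree of every irreducible
representation whose kernel has index divisible by `p`.

Let `N` be the smallest normal subgroup of index prime to `p` (`exists_least_normal`), and let `I`
be the kernel of `ℂ[G] → ℂ[G/N]`, of dimension `|G| - |G : N|`. No nonzero element of `I` is fixed
by `N` (`eq_zero_of_mapDomain_eq_zero`), so `N` acts nontrivially on every simple submodule of `I`;
by minimality of `N` the kernel of such a submodule has index divisible by `p`, hence so does its
dimension. By Maschke's theorem `I` is a direct sum of simple submodules, so `p` divides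
`|G| - |G : N|`. As `p` divides `|G|`, it divides `|G : N|`, a contradiction.

The divisibility of the index by the degree is reduced to faithful representations by passing to
the quotient by the kernel. For an irreducible `V` with character `χ`, the operator
`∑ g, χ(g⁻¹) g` on `V` is the scalar `|G| / dim V` by Schur's lemma and character orthogonality,
and it is integral because it comes from the group ring over the algebraic integers.
-/

open CategoryTheory

namespace CodegreeAux

open Representation MonoidAlgebra Module

variable {G : Type} [Group G] [Finite G]

/-- Character values are sums of eigenvalues, which are roots of unity. -/
theorem isIntegral_character {V : Type} [AddCommGroup V] [Module ℂ V] [FiniteDimensional ℂ V]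
    (ρ : Representation ℂ G V) (g : G) : IsIntegral ℤ (ρ.character g) := by
  have h : (ρ.character g) = (ρ g).charpoly.roots.sum :=
    Module.End.trace_eq_sum_roots_charpoly_of_splits (IsAlgClosed.splits _)
  rw [h]
  refine IsIntegral.multiset_sum fun μ hμ => ?_
  have hev : Module.End.HasEigenvalue (ρ g) μ :=
    (Module.End.hasEigenvalue_iff_isRoot_charpoly _ _).2 (Polynomial.isRoot_of_mem_roots hμ)
  obtain ⟨v, hv⟩ := hev.exists_hasEigenvector
  have h1 := hv.pow_apply (Nat.card G)
  rw [← map_pow, pow_card_eq_one', map_one, Module.End.one_apply] at h1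
  have h2 : μ ^ Nat.card G = 1 :=
    smul_left_injective ℂ hv.2 (show μ ^ Nat.card G • v = (1 : ℂ) • v by rw [one_smul, ← h1])
  exact IsIntegral.of_pow Nat.card_pos (h2 ▸ isIntegral_one)

/-- The degree of an irreducible complex representation divides the order of the group. -/
theorem finrank_dvd_card {V : Type} [AddCommGroup V] [Module ℂ V] [FiniteDimensional ℂ V]
    (ρ : Representation ℂ G V) [hρ : IsIrreducible ρ] : finrank ℂ V ∣ Nat.card G := by
  have := Fintype.ofFinite G
  let A := integralClosure ℤ ℂ
  -- `A[G]` is a finite `A`-module, so `a`, and with it its image `E`, is integral over `A`.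
  let a : MonoidAlgebra A G := ∑ g : G, single g ⟨ρ.character g⁻¹, isIntegral_character ρ g⁻¹⟩
  let E : End ℂ V := ∑ g : G, ρ.character g⁻¹ • ρ g
  have hE : MonoidAlgebra.lift A (End ℂ V) G ρ a = E := by
    simp only [a, E, map_sum, MonoidAlgebra.lift_single]
    rfl
  have hint : IsIntegral A E := by
    rw [← hE]
    exact (IsIntegral.of_finite A a).map _
  have hcomm : ∀ g v, E (ρ g v) = ρ g (E v) := by
    intro g v
    have h1 : E * ρ g = ρ g * E := by
      simp only [E, Finset.sum_mul, Finset.mul_sum, smul_mul_assoc, mul_smul_comm, ← map_mul]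
      refine Fintype.sum_equiv (MulAut.conj g⁻¹).toEquiv _ _ fun x => ?_
      have hχ := ρ.char_conj x⁻¹ g⁻¹
      simp [mul_assoc] at hχ
      simp [mul_assoc, hχ]
    exact congrArg (· v) h1
  obtain ⟨c, hc⟩ := (IsIrreducible.algebraMap_intertwiningMap_bijective_of_isAlgClosed
    (k := ℂ) (ρ := ρ)).2
    (E.intertwiningMap_of_isIntertwiningMap ρ ρ hcomm)
  have hc' : algebraMap ℂ (End ℂ V) c = E := congrArg IntertwiningMap.toLinearMap hc
  have hnt : Nontrivial V := by
    by_contra hV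
    rw [not_nontrivial_iff_subsingleton] at hV
    obtain ⟨W, hW⟩ := exists_ne (⊥ : Subrepresentation ρ)
    exact hW (SetLike.ext fun v => by
      rw [Subsingleton.elim v 0]
      exact iff_of_true W.toSubmodule.zero_mem (Submodule.zero_mem ⊥))
  have hcint : IsIntegral ℤ c := by
    rw [← hc', isIntegral_algebraMap_iff (algebraMap ℂ (End ℂ V)).injective] at hint
    exact isIntegral_trans (A := A) c hint
  -- Taking traces in `E = c • 1` and using that `χ` has norm one.
  have htr : c * finrank ℂ V = Nat.card G := by
    have h0 : (Nat.card G : ℂ) ≠ 0 := by exact_mod_cast Nat.card_pos.ne'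
    have := invertibleOfNonzero h0
    have h1 := char_orthonormal ρ ρ
    rw [if_pos ⟨Representation.Equiv.refl ρ⟩, inv_mul_eq_one₀ h0] at h1
    have h2 := congrArg (LinearMap.trace ℂ V) hc'
    simp only [E, Algebra.algebraMap_eq_smul_one, map_smul, map_sum, LinearMap.trace_one,
      smul_eq_mul] at h2
    rw [h2, h1]
    exact Finset.sum_congr rfl fun g _ => mul_comm _ _
  have hn : (finrank ℂ V : ℂ) ≠ 0 := by exact_mod_cast (finrank_pos (R := ℂ) (M := V)).ne'
  have hq : c = algebraMap ℚ ℂ ((Nat.card G : ℚ) / finrank ℂ V) := by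
    rw [eq_div_of_mul_eq hn htr]; simp
  rw [hq, isIntegral_algebraMap_iff (algebraMap ℚ ℂ).injective,
    IsIntegrallyClosed.isIntegral_iff] at hcint
  obtain ⟨z, hz⟩ := hcint
  have hn' : (finrank ℂ V : ℚ) ≠ 0 := by exact_mod_cast hn
  rw [eq_div_iff hn'] at hz
  rw [← Int.natCast_dvd_natCast]
  refine ⟨z, ?_⟩
  rw [mul_comm]
  rw [algebraMap_int_eq, eq_intCast] at hz
  exact_mod_cast hz.symm

/-- The representation of `G ⧸ ker ρ` induced by `ρ` has the same subrepresentations, hence is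
irreducible, and `finrank_dvd_card` applies to it. -/
theorem finrank_dvd_index_ker {V : Type} [AddCommGroup V] [Module ℂ V] [FiniteDimensional ℂ V]
    (ρ : Representation ℂ G V) [hρ : IsIrreducible ρ] : finrank ℂ V ∣ (MonoidHom.ker ρ).index := by
  let σ : Representation ℂ (G ⧸ MonoidHom.ker ρ) V := QuotientGroup.lift (MonoidHom.ker ρ) ρ
    fun _ h => h
  have hσ : ∀ g : G, σ (QuotientGroup.mk g) = ρ g := fun g => rfl
  have : IsIrreducible σ := by
    let F : Subrepresentation ρ → Subrepresentation σ := fun W =>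
      ⟨W.toSubmodule, fun q v hv => by
        induction q using QuotientGroup.induction_on with
        | H g => exact W.apply_mem_toSubmodule g hv⟩
    let F' : Subrepresentation σ → Subrepresentation ρ := fun W =>
      ⟨W.toSubmodule, fun g v hv => W.apply_mem_toSubmodule (QuotientGroup.mk g) hv⟩
    let e : Subrepresentation σ ≃o Subrepresentation ρ :=
      { toFun := F', invFun := F, left_inv := fun _ => rfl, right_inv := fun _ => rfl,
        map_rel_iff' := Iff.rfl }
    exact e.isSimpleOrder
  exact finrank_dvd_card σ

theorem simple_of {V : Type} [AddCommGroup V] [Module ℂ V] [FiniteDimensional ℂ V]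
    (ρ : Representation ℂ G V) [hρ : IsIrreducible ρ] : Simple (FDRep.of ρ) := by
  have := Fintype.ofFinite G
  have h0 : (Nat.card G : ℂ) ≠ 0 := by exact_mod_cast Nat.card_pos.ne'
  have := invertibleOfNonzero h0
  have h1 := Representation.char_orthonormal ρ ρ
  rw [if_pos ⟨Representation.Equiv.refl ρ⟩, inv_mul_eq_one₀ h0] at h1
  rw [FDRep.simple_iff_char_is_norm_one]
  exact h1.symm

omit [Finite G] in
theorem codegree_of {V : Type} [AddCommGroup V] [Module ℂ V] [FiniteDimensional ℂ V]
    (ρ : Representation ℂ G V) :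
    codegree (FDRep.of ρ) = (MonoidHom.ker ρ).index / finrank ℂ V := rfl

omit [Finite G] in
theorem isIrreducible_ofModule' (M : Type) [AddCommGroup M] [Module ℂ M] [Module ℂ[G] M]
    [IsScalarTower ℂ ℂ[G] M] [IsSimpleModule ℂ[G] M] :
    IsIrreducible (Representation.ofModule' (k := ℂ) (G := G) M) := by
  have happ : ∀ (g : G) (v : M), Representation.ofModule' (k := ℂ) (G := G) M g v =
      (single g (1 : ℂ) : ℂ[G]) • v := fun g v => rfl
  let F : Subrepresentation (Representation.ofModule' (k := ℂ) (G := G) M) → Submodule ℂ[G] M :=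
    fun W => { W.toSubmodule with
      smul_mem' := fun c m hm => by
        induction c using MonoidAlgebra.induction_linear with
        | zero => rw [zero_smul]; exact W.toSubmodule.zero_mem
        | add x y hx hy => rw [add_smul]; exact W.toSubmodule.add_mem hx hy
        | single g a =>
          rw [← mul_one a, ← smul_eq_mul, ← MonoidAlgebra.smul_single, smul_assoc]
          exact W.toSubmodule.smul_mem a (W.apply_mem_toSubmodule g hm) }
  let F' : Submodule ℂ[G] M → Subrepresentation (Representation.ofModule' (k := ℂ) (G := G) M) :=
    fun W => ⟨W.restrictScalars ℂ, fun g v hv => W.smul_mem (single g 1) hv⟩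
  let e : Subrepresentation (Representation.ofModule' (k := ℂ) (G := G) M) ≃o Submodule ℂ[G] M :=
    { toFun := F, invFun := F', left_inv := fun _ => rfl, right_inv := fun _ => rfl,
      map_rel_iff' := Iff.rfl }
  have : IsSimpleOrder (Submodule ℂ[G] M) := isSimpleModule_iff _ _ |>.1 inferInstance
  exact e.isSimpleOrder

/-- By Maschke's theorem, a divisor of the dimensions of all simple submodules of `M` divides the
dimension of `M`. -/
theorem dvd_finrank_of_simple (p : ℕ) (M : Type) [AddCommGroup M] [Module ℂ M] [Module ℂ[G] M]
    [IsScalarTower ℂ ℂ[G] M] [FiniteDimensional ℂ M]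
    (h : ∀ S : Submodule ℂ[G] M, IsSimpleModule ℂ[G] S → p ∣ finrank ℂ S) :
    p ∣ finrank ℂ M := by
  have : NeZero (Nat.card G : ℂ) := ⟨by exact_mod_cast Nat.card_pos.ne'⟩
  have : Module.Finite ℂ[G] M := Module.Finite.of_restrictScalars_finite ℂ _ _
  obtain ⟨n, S, e, hS⟩ := IsSemisimpleModule.exists_linearEquiv_fin_dfinsupp ℂ[G] M
  have e' : M ≃ₗ[ℂ] (∀ i : Fin n, S i) :=
    (e.trans (DFinsupp.linearEquivFunOnFintype (R := ℂ[G]))).restrictScalars ℂ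
  have : ∀ i, FiniteDimensional ℂ (S i) := fun i =>
    inferInstanceAs (FiniteDimensional ℂ ((S i).restrictScalars ℂ))
  rw [e'.finrank_eq, Module.finrank_pi_fintype]
  exact Finset.dvd_sum fun i _ => h _ (hS i)

/-- The kernel of `ℂ[G] → ℂ[G/N]` contains no nonzero `N`-invariant vector: an `N`-invariant `s`
is constant on cosets, so its coset sums are `|N|` times its coefficients. -/
theorem eq_zero_of_mapDomain_eq_zero (N : Subgroup G) (s : ℂ[G])
    (hs : mapDomain (QuotientGroup.mk : G → G ⧸ N) s = 0)
    (hinv : ∀ g : G, ∀ n ∈ N, s.coeff (g * n) = s.coeff g) : s = 0 := by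
  classical
  have := Fintype.ofFinite G
  ext g
  have h1 := congrArg (fun t : ℂ[G ⧸ N] => t.coeff (QuotientGroup.mk g)) hs
  simp only [mapDomain, Finsupp.mapDomain, Finsupp.sum_fintype, Finsupp.single_zero,
    implies_true, Finsupp.finsetSum_apply, Finsupp.single_apply] at h1
  have h2 : ∀ h : G, (if (QuotientGroup.mk h : G ⧸ N) = QuotientGroup.mk g then s.coeff h else 0) =
      (if (QuotientGroup.mk h : G ⧸ N) = QuotientGroup.mk g then s.coeff g else 0) := by
    intro h
    split_ifs with hh
    · have := hinv g _ (QuotientGroup.eq.1 hh.symm)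
      rwa [mul_inv_cancel_left] at this
    · rfl
  simp only [h2, ← Finset.sum_filter, Finset.sum_const] at h1
  have h3 : (Finset.univ.filter fun h : G =>
      (QuotientGroup.mk h : G ⧸ N) = QuotientGroup.mk g).card ≠ 0 :=
    Finset.card_ne_zero_of_mem (Finset.mem_filter.2 ⟨Finset.mem_univ g, rfl⟩)
  simpa [h3] using h1

/-- The intersection of two normal subgroups of index prime to `p` has index prime to `p`, so there
is a smallest such subgroup. -/
theorem exists_least_normal (p : ℕ) (hp : p.Prime) :
    ∃ N : Subgroup G, N.Normal ∧ ¬ p ∣ N.index ∧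
      ∀ K : Subgroup G, K.Normal → ¬ p ∣ K.index → N ≤ K := by
  obtain ⟨N, ⟨hN, hpN⟩, hmin⟩ := WellFounded.has_min (wellFounded_lt (α := Subgroup G))
    {N | N.Normal ∧ ¬ p ∣ N.index} ⟨⊤, inferInstance, by simpa using hp.ne_one⟩
  refine ⟨N, hN, hpN, fun K hK hpK => ?_⟩
  by_contra hle
  refine hmin (N ⊓ K) ⟨inferInstance, fun hd => ?_⟩ (inf_lt_left.2 hle)
  rw [← Subgroup.relIndex_mul_index (inf_le_left : N ⊓ K ≤ N), Subgroup.inf_relIndex_left] at hd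
  rcases hp.dvd_mul.1 hd with h | h
  · exact hpK (h.trans (Subgroup.relIndex_dvd_index_of_normal K N))
  · exact hpN h

/-- If no codegree is divisible by `p`, then `p` divides the dimension of every simple module on
which `G` acts through a group of order divisible by `p`. -/
theorem dvd_finrank_of_dvd_index (p : ℕ) (hp : p.Prime)
    (hcon : ∀ V : FDRep ℂ G, Simple V → ¬ p ∣ codegree V)
    (M : Type) [AddCommGroup M] [Module ℂ M] [Module ℂ[G] M]
    [IsScalarTower ℂ ℂ[G] M] [FiniteDimensional ℂ M] [IsSimpleModule ℂ[G] M]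
    (hindex : p ∣ (MonoidHom.ker (Representation.ofModule' (k := ℂ) (G := G) M)).index) :
    p ∣ finrank ℂ M := by
  let ρ := Representation.ofModule' (k := ℂ) (G := G) M
  have hirr := isIrreducible_ofModule' (G := G) M
  have hcod : ¬ p ∣ (MonoidHom.ker ρ).index / finrank ℂ M :=
    codegree_of ρ ▸ hcon (FDRep.of ρ) (simple_of ρ)
  have hdiv : finrank ℂ M ∣ (MonoidHom.ker ρ).index := finrank_dvd_index_ker ρ
  rw [← Nat.mul_div_cancel' hdiv] at hindex
  exact (hp.dvd_mul.1 hindex).resolve_right hcod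

theorem exists_simple_of (p : ℕ) (hp : p.Prime) (hdvd : p ∣ Nat.card G) :
    ∃ V : FDRep ℂ G, Simple V ∧ p ∣ codegree V := by
  by_contra! hcon
  obtain ⟨N, hN, hpN, hmin⟩ := exists_least_normal (G := G) p hp
  let φ : ℂ[G] →ₐ[ℂ] ℂ[G ⧸ N] := mapDomainAlgHom ℂ ℂ (QuotientGroup.mk' N)
  let I : Submodule ℂ[G] ℂ[G] := RingHom.ker φ
  have key : p ∣ finrank ℂ I := by
    have : FiniteDimensional ℂ I := inferInstanceAs (FiniteDimensional ℂ (I.restrictScalars ℂ))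
    refine dvd_finrank_of_simple (G := G) p I fun S hS => ?_
    have : FiniteDimensional ℂ S := inferInstanceAs (FiniteDimensional ℂ (S.restrictScalars ℂ))
    apply dvd_finrank_of_dvd_index p hp hcon S
    by_contra hK
    have hNK := hmin _ inferInstance hK
    have hnt := IsSimpleModule.nontrivial ℂ[G] S
    obtain ⟨s, hs⟩ := exists_ne (0 : S)
    apply hs
    have hmem : φ s.1.1 = 0 := s.1.2
    refine Subtype.ext (Subtype.ext (eq_zero_of_mapDomain_eq_zero N _ hmem fun g n hn => ?_))
    -- `s` is fixed by the conjugates of elements of `N` under left multiplication; comparing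
    -- coefficients at `g` gives invariance under right translation by `n`.
    have hn' : g * n⁻¹ * g⁻¹ ∈ MonoidHom.ker (Representation.ofModule' (k := ℂ) (G := G) S) :=
      hNK (hN.conj_mem _ (N.inv_mem hn) g)
    have h1 : (single (g * n⁻¹ * g⁻¹) (1 : ℂ) : ℂ[G]) * s.1.1 = s.1.1 :=
      congrArg (fun t : S => t.1.1) (LinearMap.congr_fun (MonoidHom.mem_ker.1 hn') s)
    have h2 := congrArg (fun t : ℂ[G] => t.coeff g) h1
    simpa [mul_assoc] using h2
  have hsurj : Function.Surjective φ := by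
    intro x
    induction x using MonoidAlgebra.induction_linear with
    | zero => exact ⟨0, map_zero _⟩
    | add x y hx hy =>
      obtain ⟨a, rfl⟩ := hx
      obtain ⟨b, rfl⟩ := hy
      exact ⟨a + b, map_add _ _ _⟩
    | single q c =>
      obtain ⟨g, rfl⟩ := QuotientGroup.mk'_surjective N q
      exact ⟨single g c, by simp [φ]⟩
  have hrank := φ.toLinearMap.finrank_range_add_finrank_ker
  have hdim (H : Type) [Group H] [Finite H] : finrank ℂ ℂ[H] = Nat.card H := by
    have := Fintype.ofFinite H
    rw [(MonoidAlgebra.coeffLinearEquiv ℂ).finrank_eq, Module.finrank_finsupp_self,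
      Nat.card_eq_fintype_card]
  rw [LinearMap.range_eq_top.2 hsurj, finrank_top, hdim, hdim] at hrank
  have hI : finrank ℂ (LinearMap.ker φ.toLinearMap) = finrank ℂ I := rfl
  rw [hI] at hrank
  exact hpN ((Nat.dvd_add_left key).1 (hrank ▸ hdvd))

end CodegreeAux

/-- For every prime `p` dividing the order of a finite group `G`, there is an irreducible
character of `G` whose codegree is divisible by `p`. -/
theorem exists_irreducible_prime_dvd_codegree {G : Type} [Group G] [Finite G]
    (p : ℕ) (hp : p.Prime) (hdvd : p ∣ Nat.card G) :
    ∃ V : FDRep ℂ G, Simple V ∧ p ∣ codegree V := by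
  exact CodegreeAux.exists_simple_of p hp hdvd
end
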